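/- arXiv:2503.22440 — 2 statements merged into one kernel-verified Lean document; each statement's English description precedes it below -/
import Mathlib

section
/- Let f = (f₁, f₂) : S¹ ⊔ S¹ ↪ ℝ³ be a smooth 2-component link whose diagram (the projection pr₁₂∘f with over/under data) has only transverse double crossings, and let h : S¹ × S¹ → S² be given by h(x₁,x₂) = (f₂(x₂)−f₁(x₁))/|f₂(x₂)−f₁(x₁)|. Then for every η as specified, ∫_{S¹×S¹} h*η equals the linking number lk(f₁,f₂) (the mapping degree of h), and for all sufficiently small ε > 0 this integral equals the sum of the signs of those crossings of the diagram at which f₂ passes over f₁. -/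
open MeasureTheory Filter Topology Set

noncomputable section

abbrev E2 : Type := EuclideanSpace ℝ (Fin 2)
abbrev E3 : Type := EuclideanSpace ℝ (Fin 3)
abbrev E4 : Type := EuclideanSpace ℝ (Fin 4)
abbrev E6 : Type := EuclideanSpace ℝ (Fin 6)

/-- The point of `ℝ³` with the given coordinates. -/
def mk3 (x y z : ℝ) : E3 := (WithLp.equiv 2 (Fin 3 → ℝ)).symm ![x, y, z]

/-- The north pole `N = (0,0,1)` of `S² ⊆ ℝ³`. -/
def NP : E3 := mk3 0 0 1

/-- Projection of `ℝ³` onto the plane `N^⊥` (the first two coordinates). -/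
def pr12 (v : E3) : ℝ × ℝ := (v 0, v 1)

/-- The `N`-coordinate. -/
def pr3 (v : E3) : ℝ := v 2

/-- `unitv v = v / ‖v‖`. -/
def unitv (v : E3) : E3 := ‖v‖⁻¹ • v

/-- Determinant of the projections to `N^⊥` of two vectors (first vector, then second). -/
def cross2 (a b : E3) : ℝ := a 0 * b 1 - a 1 * b 0

/-- 3×3 determinant (scalar triple product); for `p ∈ S²` and `v, w` tangent to `S²` at
`p`, this is the value of the standard area form of `S²` at `p` on `(v, w)`. -/
def det3 (p v w : E3) : ℝ :=
  p 0 * (v 1 * w 2 - v 2 * w 1) - p 1 * (v 0 * w 2 - v 2 * w 0) +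
    p 2 * (v 0 * w 1 - v 1 * w 0)

/-! ### Long knots and 3-component long links -/

/-- A long knot: a smooth embedding `ℝ ↪ ℝ³` which is standard outside `[-1,1]`. -/
def IsLongKnot (f : ℝ → E3) : Prop :=
  ContDiff ℝ (⊤ : ℕ∞) f ∧ Function.Injective f ∧ (∀ t, deriv f t ≠ 0) ∧
    ∀ x : ℝ, 1 ≤ |x| → f x = mk3 x 0 0

/-- Smooth isotopy of long knots. -/
def KnotIsotopic (f₀ f₁ : ℝ → E3) : Prop :=
  ∃ H : ℝ → ℝ → E3,
    ContDiff ℝ (⊤ : ℕ∞) (fun p : ℝ × ℝ => H p.1 p.2) ∧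
    (∀ s, IsLongKnot (H s)) ∧ H 0 = f₀ ∧ H 1 = f₁

/-- A 3-component long link: a smooth embedding `ℝ ⊔ ℝ ⊔ ℝ ↪ ℝ³`, standard outside
`[-1,1]`, component `k` (for `k = 1,2,3`, i.e. index `i = k - 1 : Fin 3`) having ends
`x ↦ (x, (2 - k)|x|, 0)`. -/
def IsLongLink3 (f : Fin 3 → ℝ → E3) : Prop :=
  (∀ i, ContDiff ℝ (⊤ : ℕ∞) (f i)) ∧
  (∀ i j s t, f i s = f j t → i = j ∧ s = t) ∧
  (∀ i t, deriv (f i) t ≠ 0) ∧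
  ∀ i (x : ℝ), 1 ≤ |x| → f i x = mk3 x ((1 - ((i : ℕ) : ℝ)) * |x|) 0

/-- Smooth isotopy of 3-component long links. -/
def LinkIsotopic (f₀ f₁ : Fin 3 → ℝ → E3) : Prop :=
  ∃ H : ℝ → Fin 3 → ℝ → E3,
    (∀ i, ContDiff ℝ (⊤ : ℕ∞) (fun p : ℝ × ℝ => H p.1 i p.2)) ∧
    (∀ s, IsLongLink3 (H s)) ∧ H 0 = f₀ ∧ H 1 = f₁

/-! ### Diagrams, crossings and Gauss diagram pairings -/

/-- All self-intersections of the projection of the long knot `f` are transverse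
(any two branches meeting at a multiple point have independent projected tangents). -/
def TransverseK (f : ℝ → E3) : Prop :=
  ∀ t u, t ≠ u → pr12 (f t) = pr12 (f u) → cross2 (deriv f t) (deriv f u) ≠ 0

/-- The diagram of `f` has only transverse double points. -/
def OnlyDoubleK (f : ℝ → E3) : Prop :=
  TransverseK f ∧
  ∀ t u v : ℝ, t ≠ u → u ≠ v → t ≠ v →
    pr12 (f t) = pr12 (f u) → pr12 (f u) = pr12 (f v) → False

/-- All self-intersections of the projection of the long link `f` are transverse. -/
def TransverseL (f : Fin 3 → ℝ → E3) : Prop :=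
  ∀ i j s t, (i, s) ≠ (j, t) → pr12 (f i s) = pr12 (f j t) →
    cross2 (deriv (f i) s) (deriv (f j) t) ≠ 0

/-- The diagram of the long link `f` has only transverse double points. -/
def OnlyDoubleL (f : Fin 3 → ℝ → E3) : Prop :=
  TransverseL f ∧
  ∀ i j k s t u, (i, s) ≠ (j, t) → (j, t) ≠ (k, u) → (i, s) ≠ (k, u) →
    pr12 (f i s) = pr12 (f j t) → pr12 (f j t) = pr12 (f k u) → False

/-- Crossings of a long knot diagram: pairs `(t, u)` with `t` on the lower and `u` on the
upper strand; the corresponding chord of the Gauss diagram is directed from `t` to `u`. -/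
def CrossingK (f : ℝ → E3) : Set (ℝ × ℝ) :=
  {p | p.1 ≠ p.2 ∧ pr12 (f p.1) = pr12 (f p.2) ∧ pr3 (f p.1) < pr3 (f p.2)}

/-- The sign of the crossing `p = (t, u)` (`+1` iff the projected tangent of the
over-strand followed by that of the under-strand is a positive basis of `N^⊥`). -/
def csignK (f : ℝ → E3) (p : ℝ × ℝ) : ℝ :=
  Real.sign (cross2 (deriv f p.2) (deriv f p.1))

/-- Gauss diagram pairing for a long knot: the sum, over all pairs of chords of the Gauss
diagram of `f` in the relative position prescribed by `R`, of the products of signs. -/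
def pairK (f : ℝ → E3) (R : ℝ × ℝ → ℝ × ℝ → Prop) : ℝ :=
  ∑ᶠ q ∈ {q : (ℝ × ℝ) × (ℝ × ℝ) | q.1 ∈ CrossingK f ∧ q.2 ∈ CrossingK f ∧ R q.1 q.2},
    csignK f q.1 * csignK f q.2

/-- `⟨X, G_D⟩` : chords `x₁ → x₃` and `x₄ → x₂` with `x₁ < x₂ < x₃ < x₄`. -/
def pairXK (f : ℝ → E3) : ℝ :=
  pairK f fun p q => p.1 < q.2 ∧ q.2 < p.2 ∧ p.2 < q.1

/-- `⟨X′₁, G_D⟩` : chords `a → b` and `c → a` with `a < b < c`. -/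
def pairX1K (f : ℝ → E3) : ℝ :=
  pairK f fun p q => q.2 = p.1 ∧ p.1 < p.2 ∧ p.2 < q.1

/-- `⟨X′₂, G_D⟩` : chords `a → b` and `c → b` with `a < b < c`. -/
def pairX2K (f : ℝ → E3) : ℝ :=
  pairK f fun p q => q.2 = p.2 ∧ p.1 < p.2 ∧ p.2 < q.1

/-- `⟨X′₃, G_D⟩` : chords `a → c` and `c → b` with `a < b < c`. -/
def pairX3K (f : ℝ → E3) : ℝ :=
  pairK f fun p q => p.2 = q.1 ∧ p.1 < q.2 ∧ q.2 < p.2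

/-- Crossings of a 3-strand diagram between strand `i` (under) and strand `j` (over);
the corresponding chord is directed from `p.1` on strand `i` to `p.2` on strand `j`. -/
def CrossingL (f : Fin 3 → ℝ → E3) (i j : Fin 3) : Set (ℝ × ℝ) :=
  {p | pr12 (f i p.1) = pr12 (f j p.2) ∧ pr3 (f i p.1) < pr3 (f j p.2)}

/-- The sign of the crossing `p` between strand `i` (under) and strand `j` (over). -/
def csignL (f : Fin 3 → ℝ → E3) (i j : Fin 3) (p : ℝ × ℝ) : ℝ :=
  Real.sign (cross2 (deriv (f j) p.2) (deriv (f i) p.1))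

/-- Gauss diagram pairing for a 3-component long link. -/
def pairL (f : Fin 3 → ℝ → E3) (i₁ j₁ i₂ j₂ : Fin 3) (R : ℝ × ℝ → ℝ × ℝ → Prop) : ℝ :=
  ∑ᶠ q ∈ {q : (ℝ × ℝ) × (ℝ × ℝ) |
      q.1 ∈ CrossingL f i₁ j₁ ∧ q.2 ∈ CrossingL f i₂ j₂ ∧ R q.1 q.2},
    csignL f i₁ j₁ q.1 * csignL f i₂ j₂ q.2

/-- `⟨𝒳₁, G_D⟩` : a chord from `t` on strand 1 to strand 2, and a chord from strand 3 to
`t′` on strand 1, with `t < t′`. -/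
def pairL1 (f : Fin 3 → ℝ → E3) : ℝ := pairL f 0 1 2 0 fun p q => p.1 < q.2

/-- `⟨𝒳₂, G_D⟩` : a chord from strand 1 to `u` on strand 2, and a chord from strand 3 to
`u′` on strand 2, with `u < u′`. -/
def pairL2 (f : Fin 3 → ℝ → E3) : ℝ := pairL f 0 1 2 1 fun p q => p.2 < q.2

/-- `⟨𝒳₃, G_D⟩` : a chord from strand 1 to `v` on strand 3, and a chord from `v′` on
strand 3 to strand 2, with `v < v′`. -/
def pairL3 (f : Fin 3 → ℝ → E3) : ℝ := pairL f 0 2 2 1 fun p q => p.2 < q.1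

/-- `⟨𝒳′₁, G_D⟩` : as `𝒳₁` but with `t = t′` (a triple point). -/
def pairL1' (f : Fin 3 → ℝ → E3) : ℝ := pairL f 0 1 2 0 fun p q => p.1 = q.2

/-- `⟨𝒳′₂, G_D⟩` : as `𝒳₂` but with `u = u′` (a triple point). -/
def pairL2' (f : Fin 3 → ℝ → E3) : ℝ := pairL f 0 1 2 1 fun p q => p.2 = q.2

/-- `⟨𝒳′₃, G_D⟩` : as `𝒳₃` but with `v = v′` (a triple point). -/
def pairL3' (f : Fin 3 → ℝ → E3) : ℝ := pairL f 0 2 2 1 fun p q => p.2 = q.1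

/-! ### The localized unit 2-form `η` on `S²` -/

/-- The action of a 2×2 matrix on `ℝ³ = ℝ² × ℝ`, acting on the first two coordinates. -/
def act2 (A : Matrix (Fin 2) (Fin 2) ℝ) (v : E3) : E3 :=
  mk3 (A 0 0 * v 0 + A 0 1 * v 1) (A 1 0 * v 0 + A 1 1 * v 1) (v 2)

/-- `IsEtaForm ε g` says that `η = g · (standard area form of S²)` is a smooth 2-form on
`S²` such that: (i) `supp η` lies in the `ε`-neighbourhood of the north pole `N`;
(ii) `φ*η = det φ · η` for every `φ ∈ O(2) ⊆ O(3)` (since `φ* (area form) = det φ ·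
(area form)`, this amounts to `g ∘ φ = g`); (iii) `∫_{S²} η = 1`, i.e. the integral of
`g` against the surface measure of `S²` is `1`. -/
def IsEtaForm (ε : ℝ) (g : E3 → ℝ) : Prop :=
  ContDiff ℝ (⊤ : ℕ∞) g ∧
  (∀ v : E3, ‖v‖ = 1 → g v ≠ 0 → ‖v - NP‖ < ε) ∧
  (∀ A : Matrix (Fin 2) (Fin 2) ℝ, A * A.transpose = 1 →
    ∀ v : E3, ‖v‖ = 1 → g (act2 A v) = g v) ∧
  ∫ v : Metric.sphere (0 : E3) 1, g v ∂((volume : Measure E3).toSphere) = 1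

/-! ### Configuration space integrals -/

/-- `i`-th partial derivative of a map `ℝⁿ → ℝ³`. -/
def pdv {n : ℕ} (h : EuclideanSpace ℝ (Fin n) → E3) (i : Fin n)
    (x : EuclideanSpace ℝ (Fin n)) : E3 :=
  fderiv ℝ h x (EuclideanSpace.single i 1)

/-- The pullback `h*η` (for `η = g · (area form)`) evaluated at the point `x` on the
coordinate vectors `(e_i, e_j)`. -/
def form2 {n : ℕ} (g : E3 → ℝ) (h : EuclideanSpace ℝ (Fin n) → E3)
    (x : EuclideanSpace ℝ (Fin n)) (i j : Fin n) : ℝ :=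
  g (h x) * det3 (h x) (pdv h i x) (pdv h j x)

/-- `(h*η ∧ k*η)(e₀, e₁, e₂, e₃)` at `x`. -/
def wedge22 (g : E3 → ℝ) (h k : E4 → E3) (x : E4) : ℝ :=
  (1 / 4) * ∑ σ : Equiv.Perm (Fin 4),
    ((Equiv.Perm.sign σ : ℤ) : ℝ) * form2 g h x (σ 0) (σ 1) * form2 g k x (σ 2) (σ 3)

/-- `(h*η ∧ k*η ∧ l*η)(e₀, …, e₅)` at `x`. -/
def wedge222 (g : E3 → ℝ) (h k l : E6 → E3) (x : E6) : ℝ :=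
  (1 / 8) * ∑ σ : Equiv.Perm (Fin 6),
    ((Equiv.Perm.sign σ : ℤ) : ℝ) * form2 g h x (σ 0) (σ 1) * form2 g k x (σ 2) (σ 3) *
      form2 g l x (σ 4) (σ 5)

/-- The configuration space `C_X = {x₁ < x₂ < x₃ < x₄}`. -/
def CX : Set E4 := {x | x 0 < x 1 ∧ x 1 < x 2 ∧ x 2 < x 3}

/-- The integrand `ω_X = h₁₃*η ∧ h₄₂*η` for a long knot. -/
def omegaX (f : ℝ → E3) (g : E3 → ℝ) : E4 → ℝ :=
  wedge22 g (fun x => unitv (f (x 2) - f (x 0))) (fun x => unitv (f (x 1) - f (x 3)))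

/-- The configuration space integral `I_X(f)` of a long knot. -/
def IX (f : ℝ → E3) (g : E3 → ℝ) : ℝ := ∫ x in CX, omegaX f g x

/-- The free point `x₄ ∈ ℝ³` in a `Y`-configuration `(x₁,x₂,x₃;x₄) ∈ ℝ³ × ℝ³ = ℝ⁶`. -/
def ptY (x : E6) : E3 := mk3 (x 3) (x 4) (x 5)

/-- The configuration space `C_Y(f)` for a long knot. -/
def CY (f : ℝ → E3) : Set E6 :=
  {x | x 0 < x 1 ∧ x 1 < x 2 ∧ ptY x ≠ f (x 0) ∧ ptY x ≠ f (x 1) ∧ ptY x ≠ f (x 2)}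

/-- The integrand `ω_Y = h₁₄*η ∧ h₄₂*η ∧ h₃₄*η` for a long knot. -/
def omegaY (f : ℝ → E3) (g : E3 → ℝ) : E6 → ℝ :=
  wedge222 g (fun x => unitv (ptY x - f (x 0))) (fun x => unitv (f (x 1) - ptY x))
    (fun x => unitv (ptY x - f (x 2)))

/-- The configuration space integral `I_Y(f)` of a long knot. -/
def IY (f : ℝ → E3) (g : E3 → ℝ) : ℝ := ∫ x in CY f, omegaY f g x

def CL1 : Set E4 := {x | x 0 < x 1}
def CL2 : Set E4 := {x | x 1 < x 2}
def CL3 : Set E4 := {x | x 2 < x 3}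

/-- The integrand of `I_{𝒳₁}(f)` for a 3-component long link. -/
def omegaL1 (f : Fin 3 → ℝ → E3) (g : E3 → ℝ) : E4 → ℝ :=
  wedge22 g (fun x => unitv (f 1 (x 2) - f 0 (x 0))) (fun x => unitv (f 2 (x 3) - f 0 (x 1)))

/-- The integrand of `I_{𝒳₂}(f)` for a 3-component long link. -/
def omegaL2 (f : Fin 3 → ℝ → E3) (g : E3 → ℝ) : E4 → ℝ :=
  wedge22 g (fun x => unitv (f 1 (x 1) - f 0 (x 0))) (fun x => unitv (f 1 (x 2) - f 2 (x 3)))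

/-- The integrand of `I_{𝒳₃}(f)` for a 3-component long link. -/
def omegaL3 (f : Fin 3 → ℝ → E3) (g : E3 → ℝ) : E4 → ℝ :=
  wedge22 g (fun x => unitv (f 2 (x 2) - f 0 (x 0))) (fun x => unitv (f 1 (x 1) - f 2 (x 3)))

/-- The configuration space integral `I_{𝒳₁}(f)`. -/
def IL1 (f : Fin 3 → ℝ → E3) (g : E3 → ℝ) : ℝ := ∫ x in CL1, omegaL1 f g x

/-- The configuration space integral `I_{𝒳₂}(f)`. -/
def IL2 (f : Fin 3 → ℝ → E3) (g : E3 → ℝ) : ℝ := ∫ x in CL2, omegaL2 f g x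

/-- The configuration space integral `I_{𝒳₃}(f)`. -/
def IL3 (f : Fin 3 → ℝ → E3) (g : E3 → ℝ) : ℝ := ∫ x in CL3, omegaL3 f g x

/-- The configuration space `C_𝒴(f)` for a 3-component long link. -/
def CYL (f : Fin 3 → ℝ → E3) : Set E6 :=
  {x | ptY x ≠ f 0 (x 0) ∧ ptY x ≠ f 1 (x 1) ∧ ptY x ≠ f 2 (x 2)}

/-- The integrand `ω_𝒴 = h₁₄*η ∧ h₄₂*η ∧ h₃₄*η` for a 3-component long link. -/
def omegaYL (f : Fin 3 → ℝ → E3) (g : E3 → ℝ) : E6 → ℝ :=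
  wedge222 g (fun x => unitv (ptY x - f 0 (x 0))) (fun x => unitv (f 1 (x 1) - ptY x))
    (fun x => unitv (ptY x - f 2 (x 2)))

/-- The configuration space integral `I_𝒴(f)`. -/
def ILY (f : Fin 3 → ℝ → E3) (g : E3 → ℝ) : ℝ := ∫ x in CYL f, omegaYL f g x

/-! ### Model triple points -/

/-- The affine parametrization `t ↦ a + t • v` of a straight segment. -/
def seg (a v : E3) (t : ℝ) : E3 := a + t • v

/-- A model triple point: three straight segments `S₁, S₂, S₃` (indexed by `0, 1, 2`),
`S_k` parametrized by `seg (a k) (v k) : (-δ, δ) → ℝ³`, all parallel to the plane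
`N^⊥`, whose projections to `N^⊥` meet pairwise transversely at the single common point
which is the projection of each midpoint `a k`, and with `S₂` higher than `S₁`, `S₃`. -/
def IsModelTriple (a v : Fin 3 → E3) : Prop :=
  (∀ k, v k 2 = 0) ∧ (∀ k, v k ≠ 0) ∧
  pr12 (a 0) = pr12 (a 1) ∧ pr12 (a 1) = pr12 (a 2) ∧
  (∀ j k, j ≠ k → cross2 (v j) (v k) ≠ 0) ∧
  a 0 2 < a 1 2 ∧ a 2 2 < a 1 2

/-- A model triple point of type `(←, s₁, s₂, s₃)`: `S₁` passes over `S₃`, and the signs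
of the crossings `S₁–S₃`, `S₁–S₂`, `S₂–S₃` are `s₁, s₂, s₃` respectively. -/
def ModelLeft (a v : Fin 3 → E3) (s1 s2 s3 : ℝ) : Prop :=
  IsModelTriple a v ∧ a 2 2 < a 0 2 ∧
  s1 = Real.sign (cross2 (v 0) (v 2)) ∧
  s2 = Real.sign (cross2 (v 1) (v 0)) ∧
  s3 = Real.sign (cross2 (v 1) (v 2))

/-- A model triple point of type `(→, s₁, s₂, s₃)`: `S₃` passes over `S₁`, and the signs
of the crossings `S₁–S₃`, `S₁–S₂`, `S₂–S₃` are `s₁, s₂, s₃` respectively. -/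
def ModelRight (a v : Fin 3 → E3) (s1 s2 s3 : ℝ) : Prop :=
  IsModelTriple a v ∧ a 0 2 < a 2 2 ∧
  s1 = Real.sign (cross2 (v 2) (v 0)) ∧
  s2 = Real.sign (cross2 (v 1) (v 0)) ∧
  s3 = Real.sign (cross2 (v 1) (v 2))

/-- The cube `(-δ, δ)⁴ ⊆ ℝ⁴`. -/
def cube4 (δ : ℝ) : Set E4 := {x | ∀ i, |x i| < δ}

/-- The model configuration space integral `I_X^{X′₁}`: the two points `t₁ < t₂` lie on
`S₁`, the point `t₃` on `S₂` and the point `t₄` on `S₃`; the maps are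
`h₁₃ = unit (f₂(t₃) - f₁(t₁))` and `h₄₂ = unit (f₁(t₂) - f₃(t₄))`. -/
def IX1model (a v : Fin 3 → E3) (δ : ℝ) (g : E3 → ℝ) : ℝ :=
  ∫ x in cube4 δ ∩ {x : E4 | x 0 < x 1},
    wedge22 g (fun x => unitv (seg (a 1) (v 1) (x 2) - seg (a 0) (v 0) (x 0)))
      (fun x => unitv (seg (a 0) (v 0) (x 1) - seg (a 2) (v 2) (x 3))) x

/-- The model configuration space integral `I_X^{X′₂}` (`(X′₂, l)` for a model of type
`←`, `(X′₂, r)` for a model of type `→`): the two points `t₂ < t₃` lie on `S₂`, the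
point `t₁` on `S₁` and the point `t₄` on `S₃`; the maps are
`h₁₃ = unit (f₂(t₃) - f₁(t₁))` and `h₄₂ = unit (f₂(t₂) - f₃(t₄))`. -/
def IX2model (a v : Fin 3 → E3) (δ : ℝ) (g : E3 → ℝ) : ℝ :=
  ∫ x in cube4 δ ∩ {x : E4 | x 1 < x 2},
    wedge22 g (fun x => unitv (seg (a 1) (v 1) (x 2) - seg (a 0) (v 0) (x 0)))
      (fun x => unitv (seg (a 1) (v 1) (x 1) - seg (a 2) (v 2) (x 3))) x

/-- The model configuration space integral `I_X^{X′₃}`: the two points `t₃ < t₄` lie on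
`S₃`, the point `t₁` on `S₁` and the point `t₂` on `S₂`; the maps are
`h₁₃ = unit (f₃(t₃) - f₁(t₁))` and `h₄₂ = unit (f₂(t₂) - f₃(t₄))`. -/
def IX3model (a v : Fin 3 → E3) (δ : ℝ) (g : E3 → ℝ) : ℝ :=
  ∫ x in cube4 δ ∩ {x : E4 | x 2 < x 3},
    wedge22 g (fun x => unitv (seg (a 2) (v 2) (x 2) - seg (a 0) (v 0) (x 0)))
      (fun x => unitv (seg (a 1) (v 1) (x 1) - seg (a 2) (v 2) (x 3))) x

/-- The model `Y`-integral `I_Y^{s₁,s₂,s₃}` over `(-δ,δ)³ × ℝ³`: the point `t_k` lies on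
`S_k` and `x₄ ∈ ℝ³` is free; the maps are `h₁₄ = unit (x₄ - f₁(t₁))`,
`h₄₂ = unit (f₂(t₂) - x₄)` and `h₃₄ = unit (x₄ - f₃(t₃))`. -/
def IYmodel (a v : Fin 3 → E3) (δ : ℝ) (g : E3 → ℝ) : ℝ :=
  ∫ x in {x : E6 | |x 0| < δ ∧ |x 1| < δ ∧ |x 2| < δ ∧
      ptY x ≠ seg (a 0) (v 0) (x 0) ∧ ptY x ≠ seg (a 1) (v 1) (x 1) ∧
      ptY x ≠ seg (a 2) (v 2) (x 2)},
    wedge222 g (fun x => unitv (ptY x - seg (a 0) (v 0) (x 0)))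
      (fun x => unitv (seg (a 1) (v 1) (x 1) - ptY x))
      (fun x => unitv (ptY x - seg (a 2) (v 2) (x 2))) x

/-- Near every (triple or higher) multiple point of the diagram, the strands of the long
knot `f` are straight segments parallel to the plane `N^⊥`. -/
def StraightNearMultipleK (f : ℝ → E3) : Prop :=
  ∀ t u v : ℝ, t ≠ u → u ≠ v → t ≠ v →
    pr12 (f t) = pr12 (f u) → pr12 (f u) = pr12 (f v) →
    ∃ δ > (0 : ℝ), ∃ w : E3, w 2 = 0 ∧ ∀ s : ℝ, |s - t| < δ → f s = f t + (s - t) • w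

/-- Near every (triple or higher) multiple point of the diagram, the strands of the long
link `f` are straight segments parallel to the plane `N^⊥`. -/
def StraightNearMultipleL (f : Fin 3 → ℝ → E3) : Prop :=
  ∀ (i j k : Fin 3) (t u v : ℝ), (i, t) ≠ (j, u) → (j, u) ≠ (k, v) → (i, t) ≠ (k, v) →
    pr12 (f i t) = pr12 (f j u) → pr12 (f j u) = pr12 (f k v) →
    ∃ δ > (0 : ℝ), ∃ w : E3, w 2 = 0 ∧ ∀ s : ℝ, |s - t| < δ → f i s = f i t + (s - t) • w

/-! ### Closed 2-component links and the linking number -/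

/-- A smooth loop in `ℝ³`, parametrized with period 1 and injective on a period. -/
def IsLoop (f : ℝ → E3) : Prop :=
  ContDiff ℝ (⊤ : ℕ∞) f ∧ (∀ t, f (t + 1) = f t) ∧ (∀ t, deriv f t ≠ 0) ∧
    ∀ s t : ℝ, f s = f t → ∃ n : ℤ, t - s = n

/-- The diagram of the 2-component link `(f 0, f 1)` has only transverse double points. -/
def OnlyDouble2 (f : Fin 2 → ℝ → E3) : Prop :=
  (∀ i j s t, f i s ≠ f j t → pr12 (f i s) = pr12 (f j t) →
      cross2 (deriv (f i) s) (deriv (f j) t) ≠ 0) ∧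
  ∀ i j k s t u, f i s ≠ f j t → f j t ≠ f k u → f i s ≠ f k u →
    pr12 (f i s) = pr12 (f j t) → pr12 (f j t) = pr12 (f k u) → False

/-- The crossings of the diagram at which `f₂` passes over `f₁` (one parameter period). -/
def Crossing12 (f₁ f₂ : ℝ → E3) : Set (ℝ × ℝ) :=
  {p | p.1 ∈ Ico (0 : ℝ) 1 ∧ p.2 ∈ Ico (0 : ℝ) 1 ∧
    pr12 (f₁ p.1) = pr12 (f₂ p.2) ∧ pr3 (f₁ p.1) < pr3 (f₂ p.2)}

/-- The sum of the signs of the crossings of the diagram at which `f₂` passes over `f₁`;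
this is the linking number `lk(f₁, f₂)`, i.e. the mapping degree of
`h : S¹ × S¹ → S²`. -/
def lkSum (f₁ f₂ : ℝ → E3) : ℝ :=
  ∑ᶠ p ∈ Crossing12 f₁ f₂, Real.sign (cross2 (deriv f₂ p.2) (deriv f₁ p.1))

/-- The fundamental domain `[0,1) × [0,1)` of `S¹ × S¹`. -/
def sq01 : Set E2 := {x | x 0 ∈ Ico (0 : ℝ) 1 ∧ x 1 ∈ Ico (0 : ℝ) 1}

/-- `∫_{S¹×S¹} h*η` for `h(x₁,x₂) = unit (f₂(x₂) - f₁(x₁))`. -/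
def lkIntegral (f₁ f₂ : ℝ → E3) (g : E3 → ℝ) : ℝ :=
  ∫ x in sq01, form2 g (fun x : E2 => unitv (f₂ (x 1) - f₁ (x 0))) x 0 1

/-!
An `SO(2)`-invariant 2-form on `S²` is `G(z)` times the area form for a function `G` of the height,
and it is the exterior derivative of `A(z) (x dy - y dx)` as soon as it has total mass zero. Stokes'
theorem on the torus then shows that `∫ h*η` depends on `η` only through its mass. For a form
supported in a small cap around the north pole `N`, the integral is computed by changing variables
near each preimage of `N`: every preimage contributes the mass, with the sign of the Jacobian.
Archimedes' hat-box theorem, by which the height pushes the area of `S²` forward to `2π dz`,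
evaluates the masses. For the Gauss map of a link the preimages of `N` are the crossings at which
`f₂` passes over `f₁`.
-/

section LocalDegree

variable {E : Type*} [NormedAddCommGroup E] [NormedSpace ℝ E] [FiniteDimensional ℝ E]
  {W : E → E} {S K : Set E}

lemma exists_isOpen_injOn_sign_det_fderiv_eq (hW : ContDiff ℝ 1 W) {p : E}
    (hp : (fderiv ℝ W p).det ≠ 0) :
    ∃ U, IsOpen U ∧ p ∈ U ∧ InjOn W U ∧
      ∀ x ∈ U, Real.sign (fderiv ℝ W x).det = Real.sign (fderiv ℝ W p).det := by
  have hstrict : HasStrictFDerivAt W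
      ((fderiv ℝ W p).toContinuousLinearEquivOfDetNeZero hp : E →L[ℝ] E) p := by
    rw [ContinuousLinearMap.coe_toContinuousLinearEquivOfDetNeZero]
    exact hW.contDiffAt.hasStrictFDerivAt one_ne_zero
  let e := hstrict.toOpenPartialHomeomorph W
  have hdet : Continuous fun x => (fderiv ℝ W x).det * (fderiv ℝ W p).det :=
    (ContinuousLinearMap.continuous_det.comp (hW.continuous_fderiv one_ne_zero)).mul_const _
  refine ⟨e.source ∩ {x | 0 < (fderiv ℝ W x).det * (fderiv ℝ W p).det},
    e.open_source.inter (isOpen_lt continuous_const hdet),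
    ⟨hstrict.mem_toOpenPartialHomeomorph_source, mul_self_pos.2 hp⟩,
    e.injOn.mono inter_subset_left, fun x hx => ?_⟩
  have hpos : 0 < (fderiv ℝ W x).det * (fderiv ℝ W p).det := hx.2
  rcases pos_and_pos_or_neg_and_neg_of_mul_pos hpos with ⟨hxpos, hppos⟩ | ⟨hxneg, hpneg⟩
  · rw [Real.sign_of_pos hxpos, Real.sign_of_pos hppos]
  · rw [Real.sign_of_neg hxneg, Real.sign_of_neg hpneg]

lemma image_mem_nhds_of_det_fderiv_ne_zero (hW : ContDiff ℝ 1 W) {p : E}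
    (hp : (fderiv ℝ W p).det ≠ 0) (hS : S ∈ 𝓝 p) : W '' S ∈ 𝓝 (W p) := by
  have hstrict := hW.contDiffAt.hasStrictFDerivAt (x := p) one_ne_zero
  rw [← hstrict.map_nhds_eq_of_surj
    (LinearMap.range_eq_top.2 ((fderiv ℝ W p).toContinuousLinearEquivOfDetNeZero hp).surjective)]
  exact image_mem_map hS

lemma isDiscrete_of_det_fderiv_ne_zero (hW : ContDiff ℝ 1 W) {c : E} (hS : ∀ x ∈ S, W x = c)
    (hdet : ∀ x ∈ S, (fderiv ℝ W x).det ≠ 0) : IsDiscrete S := by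
  rw [isDiscrete_iff_forall_mem_exists_isOpen]
  intro p hp
  obtain ⟨U, hU, hpU, hinj, -⟩ := exists_isOpen_injOn_sign_det_fderiv_eq hW (hdet p hp)
  refine ⟨U, hU, eq_singleton_iff_unique_mem.2 ⟨⟨hpU, hp⟩, fun x hx => ?_⟩⟩
  exact hinj hx.1 hpU ((hS x hx.2).trans (hS p hp).symm)

lemma exists_pairwiseDisjoint_injOn_nhds (hW : ContDiff ℝ 1 W) {Z : Set E} (hZ : Z.Finite)
    (hZK : Z ⊆ interior K) (hdet : ∀ p ∈ Z, (fderiv ℝ W p).det ≠ 0) :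
    ∃ V : E → Set E, Z.PairwiseDisjoint V ∧ ∀ p ∈ Z, IsOpen (V p) ∧ p ∈ V p ∧ V p ⊆ K ∧
      InjOn W (V p) ∧ ∀ x ∈ V p, Real.sign (fderiv ℝ W x).det = Real.sign (fderiv ℝ W p).det := by
  choose! U hUopen hpU hinj hsign using
    fun p hp => exists_isOpen_injOn_sign_det_fderiv_eq hW (hdet p hp)
  obtain ⟨T, hT, hTdisj⟩ := hZ.t2_separation
  refine ⟨fun p => T p ∩ (interior K ∩ U p),
    fun p hp q hq hpq => (hTdisj hp hq hpq).mono inter_subset_left inter_subset_left,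
    fun p hp => ⟨(hT p).2.inter (isOpen_interior.inter (hUopen p hp)),
      ⟨(hT p).1, hZK hp, hpU p hp⟩, fun x hx => interior_subset hx.2.1,
      (hinj p hp).mono fun x hx => hx.2.2, fun x hx => hsign p hp x hx.2.2⟩⟩

variable [MeasurableSpace E] [BorelSpace E] (μ : Measure E) [μ.IsAddHaarMeasure]

lemma setIntegral_comp_mul_det_fderiv_of_injOn (hW : Differentiable ℝ W) (hS : MeasurableSet S)
    (hinj : InjOn W S) {σ : ℝ} (hσ : ∀ x ∈ S, Real.sign (fderiv ℝ W x).det = σ) (φ : E → ℝ) :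
    ∫ x in S, φ (W x) * (fderiv ℝ W x).det ∂μ = σ * ∫ y in W '' S, φ y ∂μ := by
  rw [integral_image_eq_integral_abs_det_fderiv_smul μ hS
    (fun x _ => (hW x).hasFDerivAt.hasFDerivWithinAt) hinj, ← integral_const_mul]
  refine setIntegral_congr_fun hS fun x hx => ?_
  have hsign : (fderiv ℝ W x).det = σ * |(fderiv ℝ W x).det| := by
    rw [← hσ x hx]
    rcases lt_trichotomy (fderiv ℝ W x).det 0 with h | h | h
    · rw [Real.sign_of_neg h, abs_of_neg h, neg_one_mul, neg_neg]
    · rw [h, Real.sign_zero, zero_mul]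
    · rw [Real.sign_of_pos h, abs_of_pos h, one_mul]
  simp only [smul_eq_mul]
  linear_combination φ (W x) * hsign

lemma setIntegral_comp_mul_det_fderiv_eq_sum_mul (hW : ContDiff ℝ 1 W) (hK : IsCompact K)
    {ι : Type*} (Z : Finset ι) {V : ι → Set E} (hdisj : (Z : Set ι).PairwiseDisjoint V)
    (hV : ∀ p ∈ Z, MeasurableSet (V p)) (hVK : ∀ p ∈ Z, V p ⊆ K)
    (hinj : ∀ p ∈ Z, InjOn W (V p)) {σ : ι → ℝ}
    (hσ : ∀ p ∈ Z, ∀ x ∈ V p, Real.sign (fderiv ℝ W x).det = σ p) {φ : E → ℝ} (hφ : Continuous φ)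
    (himage : ∀ p ∈ Z, Function.support φ ⊆ W '' V p)
    (hzero : ∀ x ∈ K \ ⋃ p ∈ Z, V p, φ (W x) = 0) :
    ∫ x in K, φ (W x) * (fderiv ℝ W x).det ∂μ = (∑ p ∈ Z, σ p) * ∫ y, φ y ∂μ := by
  have hcont : Continuous fun x => φ (W x) * (fderiv ℝ W x).det := (hφ.comp hW.continuous).mul
    (ContinuousLinearMap.continuous_det.comp (hW.continuous_fderiv one_ne_zero))
  have hlocal : ∀ p ∈ Z, ∫ x in V p, φ (W x) * (fderiv ℝ W x).det ∂μ = σ p * ∫ y, φ y ∂μ :=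
    fun p hp => by
      rw [setIntegral_comp_mul_det_fderiv_of_injOn μ (hW.differentiable one_ne_zero) (hV p hp)
        (hinj p hp) (hσ p hp), setIntegral_eq_integral_of_forall_compl_eq_zero]
      exact fun y hy => by_contra fun hne => hy (himage p hp hne)
  calc ∫ x in K, φ (W x) * (fderiv ℝ W x).det ∂μ
      = ∫ x in ⋃ p ∈ Z, V p, φ (W x) * (fderiv ℝ W x).det ∂μ :=
        setIntegral_eq_of_subset_of_forall_sdiff_eq_zero hK.measurableSet (iUnion₂_subset hVK)
          fun x hx => by rw [hzero x hx, zero_mul]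
    _ = ∑ p ∈ Z, ∫ x in V p, φ (W x) * (fderiv ℝ W x).det ∂μ :=
        integral_biUnion_finset Z hV hdisj fun p hp =>
          (hcont.continuousOn.integrableOn_compact hK).mono_set (hVK p hp)
    _ = _ := by rw [Finset.sum_congr rfl hlocal, ← Finset.sum_mul]

lemma exists_nhds_setIntegral_comp_mul_det_fderiv_eq (hW : ContDiff ℝ 1 W) (hK : IsCompact K)
    (hint : K ∩ W ⁻¹' {0} ⊆ interior K) (hdet : ∀ x ∈ K ∩ W ⁻¹' {0}, (fderiv ℝ W x).det ≠ 0) :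
    ∃ N ∈ 𝓝 (0 : E), ∀ φ : E → ℝ, Continuous φ → Function.support φ ⊆ N →
      ∫ x in K, φ (W x) * (fderiv ℝ W x).det ∂μ =
        (∑ᶠ x ∈ K ∩ W ⁻¹' {0}, Real.sign (fderiv ℝ W x).det) * ∫ y, φ y ∂μ := by
  have hfin : (K ∩ W ⁻¹' {0}).Finite :=
    (hK.inter_right (isClosed_singleton.preimage hW.continuous)).finite
      (isDiscrete_of_det_fderiv_ne_zero hW (fun x hx => hx.2) hdet)
  obtain ⟨V, hVdisj, hV⟩ := exists_pairwiseDisjoint_injOn_nhds hW hfin hint hdet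
  have hmem : ∀ p ∈ hfin.toFinset, p ∈ K ∩ W ⁻¹' {0} := fun p hp => hfin.mem_toFinset.1 hp
  have hcompl : (W '' (K \ ⋃ p ∈ hfin.toFinset, V p))ᶜ ∈ 𝓝 (0 : E) := by
    have hcompact : IsCompact (K \ ⋃ p ∈ hfin.toFinset, V p) :=
      hK.diff (isOpen_biUnion fun p hp => (hV p (hmem p hp)).1)
    refine (hcompact.image hW.continuous).isClosed.isOpen_compl.mem_nhds ?_
    rintro ⟨x, ⟨hxK, hxV⟩, hx0⟩
    exact hxV (mem_biUnion (hfin.mem_toFinset.2 ⟨hxK, hx0⟩) (hV x ⟨hxK, hx0⟩).2.1)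
  have himage : ⋂ p ∈ hfin.toFinset, W '' V p ∈ 𝓝 (0 : E) := by
    refine (Filter.biInter_finset_mem _).2 fun p hp => ?_
    obtain ⟨hVopen, hpV, -⟩ := hV p (hmem p hp)
    rw [← show W p = 0 from (hmem p hp).2]
    exact image_mem_nhds_of_det_fderiv_ne_zero hW (hdet p (hmem p hp)) (hVopen.mem_nhds hpV)
  refine ⟨_, inter_mem hcompl himage, fun φ hφ hsupp => ?_⟩
  rw [finsum_mem_eq_finite_toFinset_sum _ hfin]
  exact setIntegral_comp_mul_det_fderiv_eq_sum_mul μ hW hK hfin.toFinset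
    (by rw [hfin.coe_toFinset]; exact hVdisj) (fun p hp => (hV p (hmem p hp)).1.measurableSet)
    (fun p hp => (hV p (hmem p hp)).2.2.1) (fun p hp => (hV p (hmem p hp)).2.2.2.1)
    (fun p hp => (hV p (hmem p hp)).2.2.2.2) hφ
    (fun p hp y hy => mem_iInter₂.1 (hsupp hy).2 p hp)
    (fun x hx => by_contra fun hne => (hsupp hne).1 (mem_image_of_mem W hx))

end LocalDegree

section HatBox

lemma setLIntegral_Ioi_comp_sq (f : ℝ → ENNReal) :
    ∫⁻ u in Ioi 0, f u = ∫⁻ r in Ioi 0, ENNReal.ofReal (2 * r) * f (r ^ 2) := by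
  have himage : (fun r : ℝ => r ^ 2) '' Ioi 0 = Ioi 0 := by
    refine Subset.antisymm (image_subset_iff.2 fun r (hr : 0 < r) => ?_) fun u hu => ?_
    · exact mem_Ioi.2 (pow_pos hr 2)
    · exact ⟨√u, Real.sqrt_pos.2 hu, Real.sq_sqrt (le_of_lt hu)⟩
  have hinj : InjOn (fun r : ℝ => r ^ 2) (Ioi 0) := fun r hr r' hr' h =>
    (pow_left_inj₀ (le_of_lt hr) (le_of_lt hr') two_ne_zero).1 h
  conv_lhs => rw [← himage]
  rw [lintegral_image_eq_lintegral_abs_deriv_mul measurableSet_Ioi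
    (fun r _ => (hasDerivAt_pow 2 r).hasDerivWithinAt) hinj]
  refine setLIntegral_congr_fun measurableSet_Ioi fun r hr => ?_
  have hr : 0 < r := hr
  simp only [Nat.cast_ofNat, Nat.add_one_sub_one, pow_one, abs_of_pos (mul_pos two_pos hr)]

lemma map_sq_add_sq_volume :
    (volume : Measure (ℝ × ℝ)).map (fun p => p.1 ^ 2 + p.2 ^ 2) =
      ENNReal.ofReal Real.pi • volume.restrict (Ioi 0) := by
  refine Measure.ext_of_lintegral _ fun f hf => ?_
  have htwo : ENNReal.ofReal (Real.pi - -Real.pi) = ENNReal.ofReal Real.pi * ENNReal.ofReal 2 := by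
    rw [← ENNReal.ofReal_mul Real.pi_nonneg]
    ring_nf
  calc ∫⁻ u, f u ∂(volume : Measure (ℝ × ℝ)).map (fun p => p.1 ^ 2 + p.2 ^ 2)
      = ∫⁻ p : ℝ × ℝ, f (p.1 ^ 2 + p.2 ^ 2) := lintegral_map hf (by fun_prop)
    _ = ∫⁻ p in Ioi 0 ×ˢ Ioo (-Real.pi) Real.pi, ENNReal.ofReal p.1 * f (p.1 ^ 2) * 1 := by
        rw [← lintegral_comp_polarCoord_symm, polarCoord_target]
        refine lintegral_congr fun p => ?_
        rw [mul_one, smul_eq_mul, polarCoord_symm_apply, mul_pow, mul_pow, ← mul_add,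
          Real.cos_sq_add_sin_sq, mul_one]
    _ = (∫⁻ r in Ioi 0, ENNReal.ofReal r * f (r ^ 2)) * ENNReal.ofReal (Real.pi - -Real.pi) := by
        rw [Measure.volume_eq_prod, ← Measure.prod_restrict,
          lintegral_prod_mul (f := fun r : ℝ => ENNReal.ofReal r * f (r ^ 2)) (g := fun _ => 1)
            (by fun_prop) aemeasurable_const, setLIntegral_one, Real.volume_Ioo]
    _ = ENNReal.ofReal Real.pi * ∫⁻ r in Ioi 0, ENNReal.ofReal (2 * r) * f (r ^ 2) := by
        simp only [ENNReal.ofReal_mul zero_le_two, mul_assoc]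
        rw [lintegral_const_mul _ (by fun_prop), htwo]
        ring
    _ = ∫⁻ u, f u ∂(ENNReal.ofReal Real.pi • volume.restrict (Ioi 0)) := by
        rw [lintegral_smul_measure, ← setLIntegral_Ioi_comp_sq, smul_eq_mul]

lemma measurePreserving_E3_prod :
    MeasurePreserving (fun v : E3 => (v 2, (v 0, v 1))) volume (volume : Measure (ℝ × ℝ × ℝ)) :=
  ((MeasurePreserving.id volume).prod (volume_preserving_finTwoArrow ℝ)).comp
    ((volume_preserving_piFinSuccAbove (fun _ : Fin 3 => ℝ) 2).comp
      (EuclideanSpace.volume_preserving_symm_measurableEquiv_toLp (Fin 3)))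

lemma norm_sq_E3 (v : E3) : ‖v‖ ^ 2 = v 0 ^ 2 + v 1 ^ 2 + v 2 ^ 2 := by
  rw [EuclideanSpace.real_norm_sq_eq, Fin.sum_univ_three]

lemma map_height_norm_sq_volume :
    (volume : Measure E3).map (fun v => (v 2, ‖v‖ ^ 2)) =
      ENNReal.ofReal Real.pi • (volume : Measure (ℝ × ℝ)).restrict {q | q.1 ^ 2 < q.2} := by
  ext T hT
  have hslice : ∀ z : ℝ, (volume : Measure (ℝ × ℝ)) {p | (z, p.1 ^ 2 + p.2 ^ 2 + z ^ 2) ∈ T} =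
      ENNReal.ofReal Real.pi * volume {w | (z, w) ∈ T ∩ {q | q.1 ^ 2 < q.2}} := fun z => by
    have hTz : MeasurableSet {u : ℝ | (z, u + z ^ 2) ∈ T} := measurableSet_preimage (by fun_prop) hT
    have hmap := congrArg (fun μ => μ {u : ℝ | (z, u + z ^ 2) ∈ T}) map_sq_add_sq_volume
    simp only [Measure.map_apply (show Measurable fun p : ℝ × ℝ => p.1 ^ 2 + p.2 ^ 2 by fun_prop)
      hTz, Measure.smul_apply, Measure.restrict_apply hTz, smul_eq_mul] at hmap
    refine hmap.trans (congrArg _ ?_)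
    rw [← measure_preimage_add_right volume (z ^ 2) {w | (z, w) ∈ T ∩ {q | q.1 ^ 2 < q.2}}]
    congr 1
    ext u
    simp [and_comm]
  have hpre : MeasurableSet {q : ℝ × ℝ × ℝ | (q.1, q.2.1 ^ 2 + q.2.2 ^ 2 + q.1 ^ 2) ∈ T} :=
    measurableSet_preimage (by fun_prop) hT
  have hpara : MeasurableSet {q : ℝ × ℝ | q.1 ^ 2 < q.2} :=
    measurableSet_lt (by fun_prop) (by fun_prop)
  rw [Measure.map_apply (by fun_prop) hT, Measure.smul_apply, Measure.restrict_apply hT]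
  simp only [norm_sq_E3]
  refine (measurePreserving_E3_prod.measure_preimage hpre.nullMeasurableSet).trans ?_
  rw [Measure.volume_eq_prod, Measure.prod_apply hpre, Measure.volume_eq_prod,
    Measure.prod_apply (hT.inter hpara), smul_eq_mul, ← lintegral_const_mul]
  · exact lintegral_congr hslice
  · exact measurable_measure_prodMk_left (hT.inter hpara)

lemma setLIntegral_sqrt_Ioo :
    ∫⁻ w in Ioo (0 : ℝ) 1, ENNReal.ofReal √w = ENNReal.ofReal (2 / 3) := by
  rw [← ofReal_integral_eq_lintegral_ofReal
    ((Real.continuous_sqrt.continuousOn.integrableOn_Icc).mono_set Ioo_subset_Icc_self)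
    (ae_of_all _ Real.sqrt_nonneg), ← integral_Ioc_eq_integral_Ioo,
    ← intervalIntegral.integral_of_le zero_le_one]
  simp only [Real.sqrt_eq_rpow]
  rw [integral_rpow (by norm_num)]
  norm_num

lemma volume_parabola_sector {s : Set ℝ} (hs : MeasurableSet s) :
    volume ({q : ℝ × ℝ | q.2 ∈ Ioo 0 1 ∧ q.1 / √q.2 ∈ s} ∩ {q | q.1 ^ 2 < q.2}) =
      ENNReal.ofReal (2 / 3) * volume (s ∩ Ioo (-1) 1) := by
  have hslice : ∀ w : ℝ, volume ((fun z => (z, w)) ⁻¹'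
      ({q : ℝ × ℝ | q.2 ∈ Ioo 0 1 ∧ q.1 / √q.2 ∈ s} ∩ {q | q.1 ^ 2 < q.2})) =
      (Ioo 0 1).indicator (fun w => ENNReal.ofReal √w * volume (s ∩ Ioo (-1) 1)) w := fun w => by
    by_cases hw : w ∈ Ioo (0 : ℝ) 1
    · have hsqrt : 0 < √w := Real.sqrt_pos.2 hw.1
      have hscale : ENNReal.ofReal √w = ENNReal.ofReal |(√w)⁻¹⁻¹| := by
        rw [inv_inv, abs_of_pos hsqrt]
      rw [indicator_of_mem hw, hscale, ← Real.volume_preimage_mul_right (inv_ne_zero hsqrt.ne')]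
      congr 1
      ext z
      have hz : z ^ 2 < w ↔ z * (√w)⁻¹ ∈ Ioo (-1) 1 := by
        rw [mem_Ioo, ← abs_lt, abs_mul, abs_inv, abs_of_pos hsqrt, ← div_eq_mul_inv,
          div_lt_one hsqrt, Real.lt_sqrt (abs_nonneg z), sq_abs]
      simp only [mem_preimage, mem_inter_iff, mem_ofPred_eq, hw, true_and, hz, div_eq_mul_inv]
    · rw [indicator_of_notMem hw]
      convert measure_empty (μ := volume)
      exact eq_empty_of_forall_notMem fun z hz => hw hz.1.1
  have hmeas : MeasurableSet
      ({q : ℝ × ℝ | q.2 ∈ Ioo 0 1 ∧ q.1 / √q.2 ∈ s} ∩ {q | q.1 ^ 2 < q.2}) :=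
    ((measurableSet_preimage measurable_snd measurableSet_Ioo).inter
      (measurableSet_preimage (by fun_prop) hs)).inter
      (measurableSet_lt (by fun_prop) (by fun_prop))
  rw [Measure.volume_eq_prod, Measure.prod_apply_symm hmeas, lintegral_congr hslice,
    lintegral_indicator measurableSet_Ioo, lintegral_mul_const _ (by fun_prop),
    setLIntegral_sqrt_Ioo]

open scoped Pointwise in
lemma Ioo_smul_sphere_height_preimage (s : Set ℝ) :
    Ioo (0 : ℝ) 1 • (((↑) : Metric.sphere (0 : E3) 1 → E3) '' {v | (v : E3) 2 ∈ s}) =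
      (fun v : E3 => (v 2, ‖v‖ ^ 2)) ⁻¹' {q | q.2 ∈ Ioo 0 1 ∧ q.1 / √q.2 ∈ s} := by
  ext v
  simp only [Set.mem_smul, mem_preimage, mem_ofPred_eq, Real.sqrt_sq (norm_nonneg _)]
  constructor
  · rintro ⟨r, hr, _, ⟨u, hu, rfl⟩, rfl⟩
    have hnorm : ‖r • (u : E3)‖ = r := by
      rw [norm_smul, norm_eq_of_mem_sphere, mul_one, Real.norm_of_nonneg hr.1.le]
    rw [hnorm, PiLp.smul_apply, smul_eq_mul, mul_div_cancel_left₀ _ hr.1.ne']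
    exact ⟨⟨pow_pos hr.1 2, pow_lt_one₀ hr.1.le hr.2 two_ne_zero⟩, hu⟩
  · rintro ⟨⟨hpos, hlt⟩, hs⟩
    have hv : 0 < ‖v‖ := by
      rcases (norm_nonneg v).lt_or_eq with h | h
      · exact h
      · simp [← h] at hpos
    refine ⟨‖v‖, ⟨hv, (sq_lt_one_iff₀ hv.le).1 hlt⟩, ‖v‖⁻¹ • v, ⟨⟨‖v‖⁻¹ • v, ?_⟩, ?_, rfl⟩,
      smul_inv_smul₀ hv.ne' v⟩
    · rw [mem_sphere_zero_iff_norm, norm_smul, norm_inv, norm_norm, inv_mul_cancel₀ hv.ne']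
    · simpa only [mem_ofPred_eq, PiLp.smul_apply, smul_eq_mul, inv_mul_eq_div] using hs

theorem map_height_toSphere :
    (volume : Measure E3).toSphere.map (fun v : Metric.sphere (0 : E3) 1 => (v : E3) 2) =
      ENNReal.ofReal (2 * Real.pi) • volume.restrict (Ioo (-1) 1) := by
  ext s hs
  have hsector : MeasurableSet {q : ℝ × ℝ | q.2 ∈ Ioo 0 1 ∧ q.1 / √q.2 ∈ s} :=
    (measurableSet_preimage measurable_snd measurableSet_Ioo).inter
      (measurableSet_preimage (by fun_prop) hs)
  have hheight : Measurable fun v : Metric.sphere (0 : E3) 1 => (v : E3) 2 := by fun_prop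
  have hmap := congrArg (fun μ => μ {q : ℝ × ℝ | q.2 ∈ Ioo 0 1 ∧ q.1 / √q.2 ∈ s})
    map_height_norm_sq_volume
  simp only [Measure.map_apply (show Measurable fun v : E3 => (v 2, ‖v‖ ^ 2) by fun_prop) hsector,
    Measure.smul_apply, Measure.restrict_apply hsector, volume_parabola_sector hs, smul_eq_mul]
    at hmap
  rw [Measure.map_apply hheight hs, Measure.toSphere_apply' _ (hheight hs), Measure.smul_apply,
    Measure.restrict_apply hs, smul_eq_mul, finrank_euclideanSpace_fin]
  refine (congrArg _ ((congrArg _ (Ioo_smul_sphere_height_preimage s)).trans hmap)).trans ?_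
  rw [← mul_assoc, ← mul_assoc, ← ENNReal.ofReal_natCast, ← ENNReal.ofReal_mul (by positivity),
    ← ENNReal.ofReal_mul (by positivity)]
  ring_nf

lemma integral_toSphere_comp_height (G : ℝ → ℝ) (hG : Continuous G) :
    ∫ v : Metric.sphere (0 : E3) 1, G ((v : E3) 2) ∂(volume : Measure E3).toSphere =
      2 * Real.pi * ∫ z in (-1)..1, G z := by
  rw [← integral_map (φ := fun v : Metric.sphere (0 : E3) 1 => (v : E3) 2) (by fun_prop)
    hG.aestronglyMeasurable, map_height_toSphere, integral_smul_measure,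
    ENNReal.toReal_ofReal (by positivity), smul_eq_mul,
    intervalIntegral.integral_of_le (by norm_num), integral_Ioc_eq_integral_Ioo]

lemma integral_comp_sq_add_sq {ψ : ℝ → ℝ} (hψ : Continuous ψ) (hzero : ∀ u, 1 ≤ u → ψ u = 0) :
    ∫ p : ℝ × ℝ, ψ (p.1 ^ 2 + p.2 ^ 2) = Real.pi * ∫ u in (0)..1, ψ u := by
  rw [← integral_map (φ := fun p : ℝ × ℝ => p.1 ^ 2 + p.2 ^ 2) (by fun_prop)
    hψ.aestronglyMeasurable, map_sq_add_sq_volume, integral_smul_measure,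
    ENNReal.toReal_ofReal Real.pi_nonneg, smul_eq_mul,
    intervalIntegral.integral_of_le zero_le_one,
    setIntegral_eq_of_subset_of_forall_sdiff_eq_zero measurableSet_Ioi Ioc_subset_Ioi_self
      fun u hu => hzero u (le_of_not_ge fun h => hu.2 ⟨hu.1, h⟩)]

lemma integral_posPart_mul_comp_one_sub_sq {ψ : ℝ → ℝ} (hψ : Continuous ψ) :
    ∫ z in (-1)..1, max z 0 * ψ (1 - z ^ 2) = (∫ u in (0)..1, ψ u) / 2 := by
  have hneg : ∫ z in (-1)..0, max z 0 * ψ (1 - z ^ 2) = 0 := by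
    refine (intervalIntegral.integral_congr (g := fun _ => (0 : ℝ)) fun z hz => ?_).trans
      intervalIntegral.integral_zero
    rw [uIcc_of_le (by norm_num)] at hz
    simp only [max_eq_right hz.2, zero_mul]
  have hpos : ∫ z in (0)..1, max z 0 * ψ (1 - z ^ 2) =
      -(∫ z in (0)..1, ψ (1 - z ^ 2) * (-(2 * z))) / 2 := by
    rw [← intervalIntegral.integral_neg, ← intervalIntegral.integral_div]
    refine intervalIntegral.integral_congr fun z hz => ?_
    rw [uIcc_of_le zero_le_one] at hz
    simp only [max_eq_left hz.1]
    ring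
  have hsubst := intervalIntegral.integral_comp_mul_deriv (a := 0) (b := 1) (g := ψ)
    (fun z _ => by simpa using (hasDerivAt_pow 2 z).const_sub 1) (by fun_prop) hψ
  have hint : ∀ a b : ℝ, IntervalIntegrable (fun z => max z 0 * ψ (1 - z ^ 2)) volume a b :=
    fun a b => Continuous.intervalIntegrable (by fun_prop) a b
  rw [← intervalIntegral.integral_add_adjacent_intervals (hint _ 0) (hint 0 _), hneg, hpos]
  simp only [Function.comp_apply] at hsubst
  rw [hsubst, intervalIntegral.integral_symm]
  norm_num

end HatBox

section ZonalForms

lemma hasFDerivAt_mul_of_continuousAt_of_eq_zero {E : Type*} [NormedAddCommGroup E]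
    [NormedSpace ℝ E] {u v : E → ℝ} {v' : E →L[ℝ] ℝ} {p : E} (hu : ContinuousAt u p)
    (hv : HasFDerivAt v v' p) (hp : v p = 0) :
    HasFDerivAt (fun q => u q * v q) (u p • v') p := by
  have hbig : v =O[𝓝 p] fun q => q - p := by simpa only [hp, sub_zero] using hv.isBigO_sub
  have hsmall : (fun q => u q - u p) =o[𝓝 p] fun _ => (1 : ℝ) := by
    rw [Asymptotics.isLittleO_one_iff]
    simpa only [sub_self] using hu.tendsto.sub_const (u p)
  have hprod : HasFDerivAt (fun q => (u q - u p) * v q) (0 : E →L[ℝ] ℝ) p := by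
    refine .of_isLittleO ?_
    simpa [hp] using hsmall.mul_isBigO hbig.norm_right
  refine ((hprod.fun_add (hv.const_mul (u p))).congr_fderiv (zero_add _)).congr_of_eventuallyEq
    (.of_forall fun q => ?_)
  ring

lemma exists_eq_mul_one_sub_sq_of_differentiable {D : ℝ → ℝ} (hD : Differentiable ℝ D)
    (hD₁ : D 1 = 0) (hD₂ : D (-1) = 0) :
    ∃ A : ℝ → ℝ, Continuous A ∧ (∀ z, z ^ 2 ≠ 1 → DifferentiableAt ℝ A z) ∧
      ∀ z, D z = A z * (1 - z ^ 2) := by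
  set B := dslope D 1
  have hB : ∀ z ≠ 1, DifferentiableAt ℝ B z := fun z hz =>
    (differentiableAt_dslope_of_ne hz).2 (hD z)
  have hB₂ : B (-1) = 0 := by
    simp only [B, dslope_of_ne D (show (-1 : ℝ) ≠ 1 by norm_num), slope_def_field, hD₁, hD₂,
      sub_zero, zero_div]
  have hBcont : Continuous B := continuous_iff_continuousAt.2 fun z => by
    obtain rfl | hz := eq_or_ne z 1
    · exact continuousAt_dslope_same.2 (hD 1)
    · exact (hB z hz).continuousAt
  refine ⟨fun z => -dslope B (-1) z, (continuous_iff_continuousAt.2 fun z => ?_).neg,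
    fun z hz => ?_, fun z => ?_⟩
  · obtain rfl | hz := eq_or_ne z (-1)
    · exact continuousAt_dslope_same.2 (hB (-1) (by norm_num))
    · exact (continuousAt_dslope_of_ne hz).2 hBcont.continuousAt
  · have hz₁ : z ≠ 1 := fun h => hz (by rw [h, one_pow])
    have hz₂ : z ≠ -1 := fun h => hz (by rw [h, neg_one_sq])
    exact ((differentiableAt_dslope_of_ne hz₂).2 (hB z hz₁)).neg
  · have h₁ : (z - 1) * B z = D z - D 1 := sub_smul_dslope D 1 z
    have h₂ : (z - -1) * dslope B (-1) z = B z - B (-1) := sub_smul_dslope B (-1) z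
    linear_combination -h₁ + hD₁ - (z - 1) * h₂ + (z - 1) * hB₂

lemma exists_eq_one_sub_sq_mul_of_integral_eq_zero {G : ℝ → ℝ} (hG : Continuous G)
    (hmean : ∫ z in (-1)..1, G z = 0) :
    ∃ A : ℝ → ℝ, Continuous A ∧ (∀ z, z ^ 2 ≠ 1 → DifferentiableAt ℝ A z) ∧
      ∀ z, G z = (1 - z ^ 2) * deriv A z - 2 * z * A z := by
  have hD : ∀ z, HasDerivAt (fun z => ∫ w in (-1)..z, G w) (G z) z := fun z =>
    (hG.integral_hasStrictDerivAt (-1) z).hasDerivAt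
  obtain ⟨A, hA, hdiff, hfactor⟩ := exists_eq_mul_one_sub_sq_of_differentiable
    (fun z => (hD z).differentiableAt) hmean intervalIntegral.integral_same
  refine ⟨A, hA, hdiff, fun z => ?_⟩
  have hpow : HasDerivAt (fun z : ℝ => 1 - z ^ 2) (-(2 * z)) z := by
    simpa using (hasDerivAt_pow 2 z).const_sub 1
  simp only [hfactor] at hD
  by_cases hz : z ^ 2 = 1
  · have hAz := hasFDerivAt_mul_of_continuousAt_of_eq_zero hA.continuousAt hpow.hasFDerivAt
      (by rw [hz, sub_self])
    have hval : G z = A z * -(2 * z) := by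
      simpa using (hD z).unique (hasFDerivAt_iff_hasDerivAt.1 hAz)
    rw [hval, hz]
    ring
  · rw [(hD z).unique ((hdiff z hz).hasDerivAt.fun_mul hpow)]
    ring

/-- The pullback `h^* ω` of the area form of the unit sphere along a map `h : ℝ² → S²`, as a
density with respect to `ds ∧ dt`. -/
def areaPullback (h : ℝ × ℝ → E3) (p : ℝ × ℝ) : ℝ :=
  det3 (h p) (fderiv ℝ h p (1, 0)) (fderiv ℝ h p (0, 1))

lemma cross_eq_det3_smul {n v w : E3} (hn : ‖n‖ = 1) (hv : inner ℝ n v = 0)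
    (hw : inner ℝ n w = 0) :
    v 0 * w 1 - v 1 * w 0 = n 2 * det3 n v w ∧ v 1 * w 2 - v 2 * w 1 = n 0 * det3 n v w ∧
      v 2 * w 0 - v 0 * w 2 = n 1 * det3 n v w := by
  have hnn : n 0 ^ 2 + n 1 ^ 2 + n 2 ^ 2 = 1 := by rw [← norm_sq_E3, hn, one_pow]
  simp only [PiLp.inner_apply, Fin.sum_univ_three, RCLike.inner_apply, conj_trivial] at hv hw
  simp only [det3]
  refine ⟨?_, ?_, ?_⟩
  · linear_combination (-(v 0 * w 1 - v 1 * w 0)) * hnn - (n 0 * v 1 - n 1 * v 0) * hw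
      + (n 0 * w 1 - n 1 * w 0) * hv
  · linear_combination (-(v 1 * w 2 - v 2 * w 1)) * hnn - (n 1 * v 2 - n 2 * v 1) * hw
      + (n 1 * w 2 - n 2 * w 1) * hv
  · linear_combination (-(v 2 * w 0 - v 0 * w 2)) * hnn - (n 2 * v 0 - n 0 * v 2) * hw
      + (n 2 * w 0 - n 0 * w 2) * hv

lemma inner_fderiv_eq_zero_of_norm_eq_one {E F : Type*} [NormedAddCommGroup E] [NormedSpace ℝ E]
    [NormedAddCommGroup F] [InnerProductSpace ℝ F] {h : E → F} {p : E}
    (hh : DifferentiableAt ℝ h p) (hnorm : ∀ q, ‖h q‖ = 1) (v : E) :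
    inner ℝ (h p) (fderiv ℝ h p v) = 0 := by
  have hconst : (fun q => inner ℝ (h q) (h q)) = fun _ => (1 : ℝ) := by
    funext q
    rw [real_inner_self_eq_norm_sq, hnorm, one_pow]
  have hderiv := fderiv_inner_apply ℝ hh hh v
  simp only [hconst, fderiv_fun_const, Pi.zero_apply, zero_apply,
    real_inner_comm (h p)] at hderiv
  linarith

lemma fderiv_coord_apply {E ι : Type*} [NormedAddCommGroup E] [NormedSpace ℝ E] [Finite ι]
    {h : E → EuclideanSpace ℝ ι} {p : E} (hh : DifferentiableAt ℝ h p) (i : ι) (v : E) :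
    fderiv ℝ (fun q => h q i) p v = fderiv ℝ h p v i := by
  cases nonempty_fintype ι
  exact congrArg (· v) ((EuclideanSpace.proj (𝕜 := ℝ) i).hasFDerivAt.comp p hh.hasFDerivAt).fderiv

lemma periodic_fderiv {E F : Type*} [NormedAddCommGroup E] [NormedSpace ℝ E]
    [NormedAddCommGroup F] [NormedSpace ℝ F] {f : E → F} {c : E} (hf : Function.Periodic f c) :
    Function.Periodic (fderiv ℝ f) c := fun x => by
  rw [← fderiv_comp_add_right, hf.funext]

lemma integral_Icc_curl_eq_zero {θ : ℝ × ℝ → ℝ × ℝ →L[ℝ] ℝ}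
    {θ' : ℝ × ℝ → ℝ × ℝ →L[ℝ] ℝ × ℝ →L[ℝ] ℝ} (hθ : ∀ p, HasFDerivAt θ (θ' p) p)
    (hper₁ : Function.Periodic θ (1, 0)) (hper₂ : Function.Periodic θ (0, 1))
    (hcurl : Continuous fun p => θ' p (1, 0) (0, 1) - θ' p (0, 1) (1, 0)) (a : ℝ × ℝ) :
    ∫ p in Icc a (a + 1), (θ' p (1, 0) (0, 1) - θ' p (0, 1) (1, 0)) = 0 := by
  have hcoord : ∀ v p, HasFDerivAt (fun q => θ q v) ((θ' p).flip v) p := fun v p => by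
    simpa using (hθ p).clm_apply (hasFDerivAt_const v p)
  have hcont : ∀ v, Continuous fun q => θ q v := fun v =>
    continuous_iff_continuousAt.2 fun p => (hcoord v p).continuousAt
  have hshift₁ : ∀ t, θ (a.1 + 1, t) = θ (a.1, t) := fun t => by simpa using hper₁ (a.1, t)
  have hshift₂ : ∀ s, θ (s, a.2 + 1) = θ (s, a.2) := fun s => by simpa using hper₂ (s, a.2)
  have hdiv := integral_divergence_prod_Icc_of_hasFDerivAt_off_countable_of_le
    (fun q => θ q (0, 1)) (fun q => -θ q (1, 0)) _ _ a (a + 1) (by simp) ∅ countable_empty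
    (hcont _).continuousOn (hcont _).neg.continuousOn (fun p _ => hcoord _ p)
    (fun p _ => (hcoord _ p).neg)
    (by simpa [sub_eq_add_neg] using hcurl.continuousOn.integrableOn_compact isCompact_Icc)
  simpa [hshift₁, hshift₂, sub_eq_add_neg] using hdiv

/-- The pullback along `h = (x, y, z)` of the `1`-form `A(z) (x dy - y dx)`. -/
def zonalOneForm (A : ℝ → ℝ) (h : ℝ × ℝ → E3) (p : ℝ × ℝ) : ℝ × ℝ →L[ℝ] ℝ :=
  (A (h p 2) * h p 0) • fderiv ℝ (fun q => h q 1) p -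
    (A (h p 2) * h p 1) • fderiv ℝ (fun q => h q 0) p

lemma hasFDerivAt_comp_mul_of_differentiableAt_or_eq_zero {E : Type*} [NormedAddCommGroup E]
    [NormedSpace ℝ E] {A : ℝ → ℝ} {x z : E → ℝ} {p : E} (hA : ContinuousAt A (z p))
    (hx : DifferentiableAt ℝ x p) (hz : DifferentiableAt ℝ z p)
    (hAx : DifferentiableAt ℝ A (z p) ∨ x p = 0) :
    HasFDerivAt (fun q => A (z q) * x q)
      (A (z p) • fderiv ℝ x p + (x p * deriv A (z p)) • fderiv ℝ z p) p := by
  obtain hdiff | hzero := hAx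
  · have hcomp := hdiff.hasDerivAt.comp_hasFDerivAt p hz.hasFDerivAt
    refine (hcomp.fun_mul hx.hasFDerivAt).congr_fderiv ?_
    rw [smul_smul]
    rfl
  · simpa [hzero] using hasFDerivAt_mul_of_continuousAt_of_eq_zero
      (hA.comp hz.continuousAt) hx.hasFDerivAt hzero

lemma exists_hasFDerivAt_zonalOneForm {A G : ℝ → ℝ} {h : ℝ × ℝ → E3} (hh : ContDiff ℝ 2 h)
    (hnorm : ∀ p, ‖h p‖ = 1) (hA : Continuous A)
    (hdiff : ∀ z, z ^ 2 ≠ 1 → DifferentiableAt ℝ A z)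
    (hG : ∀ z, G z = (1 - z ^ 2) * deriv A z - 2 * z * A z) (p : ℝ × ℝ) :
    ∃ θ' : ℝ × ℝ →L[ℝ] ℝ × ℝ →L[ℝ] ℝ, HasFDerivAt (zonalOneForm A h) θ' p ∧
      θ' (1, 0) (0, 1) - θ' (0, 1) (1, 0) = -(G (h p 2) * areaPullback h p) := by
  have hcoord : ∀ i, ContDiff ℝ 2 fun q => h q i := fun i => by fun_prop
  have hd : ∀ i, DifferentiableAt ℝ (fun q => h q i) p := fun i =>
    (hcoord i).differentiable two_ne_zero p
  have hd₂ : ∀ i, DifferentiableAt ℝ (fderiv ℝ fun q => h q i) p := fun i =>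
    ((hcoord i).fderiv_right (m := 1) (by norm_num)).differentiable one_ne_zero p
  have hsymm : ∀ i, IsSymmSndFDerivAt ℝ (fun q => h q i) p := fun i =>
    (hcoord i).contDiffAt.isSymmSndFDerivAt (by simp)
  have hsphere : h p 0 ^ 2 + h p 1 ^ 2 + h p 2 ^ 2 = 1 := by
    rw [← norm_sq_E3, hnorm, one_pow]
  have hA₀ : DifferentiableAt ℝ A (h p 2) ∨ h p 0 = 0 := or_iff_not_imp_right.2 fun h₀ =>
    hdiff _ fun h₂ => h₀ (by nlinarith [sq_nonneg (h p 0), sq_nonneg (h p 1)])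
  have hA₁ : DifferentiableAt ℝ A (h p 2) ∨ h p 1 = 0 := or_iff_not_imp_right.2 fun h₀ =>
    hdiff _ fun h₂ => h₀ (by nlinarith [sq_nonneg (h p 0), sq_nonneg (h p 1)])
  have hθ := ((hasFDerivAt_comp_mul_of_differentiableAt_or_eq_zero hA.continuousAt (hd 0) (hd 2)
    hA₀).fun_smul (hd₂ 1).hasFDerivAt).fun_sub
    ((hasFDerivAt_comp_mul_of_differentiableAt_or_eq_zero hA.continuousAt (hd 1) (hd 2)
    hA₁).fun_smul (hd₂ 0).hasFDerivAt)
  refine ⟨_, hθ, ?_⟩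
  have hhd := hh.differentiable two_ne_zero p
  obtain ⟨hz, hx, hy⟩ := cross_eq_det3_smul (hnorm p)
    (inner_fderiv_eq_zero_of_norm_eq_one hhd hnorm (1, 0))
    (inner_fderiv_eq_zero_of_norm_eq_one hhd hnorm (0, 1))
  have hsymm₀ := hsymm 0 (1, 0) (0, 1)
  have hsymm₁ := hsymm 1 (1, 0) (0, 1)
  simp only [sub_apply, add_apply, smul_apply, ContinuousLinearMap.smulRight_apply, smul_eq_mul,
    fderiv_coord_apply hhd, hG, areaPullback]
  set J := det3 (h p) (fderiv ℝ h p (1, 0)) (fderiv ℝ h p (0, 1))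
  linear_combination (2 * A (h p 2)) * hz
    - deriv A (h p 2) * (h p 0 * hx + h p 1 * hy)
    - deriv A (h p 2) * J * hsphere
    + A (h p 2) * h p 0 * hsymm₁ - A (h p 2) * h p 1 * hsymm₀

lemma continuous_areaPullback {h : ℝ × ℝ → E3} (hh : ContDiff ℝ 1 h) :
    Continuous (areaPullback h) := by
  have hdet : Continuous fun q : E3 × E3 × E3 => det3 q.1 q.2.1 q.2.2 := by unfold det3; fun_prop
  have hD : ∀ v, Continuous fun p => fderiv ℝ h p v := fun v =>
    (hh.continuous_fderiv one_ne_zero).clm_apply continuous_const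
  exact hdet.comp (hh.continuous.prodMk ((hD _).prodMk (hD _)))

lemma continuous_zonal_mul_areaPullback {G : ℝ → ℝ} {h : ℝ × ℝ → E3} (hG : Continuous G)
    (hh : ContDiff ℝ 1 h) : Continuous fun p => G (h p 2) * areaPullback h p := by
  have hcont := hh.continuous
  exact (hG.comp (by fun_prop)).mul (continuous_areaPullback hh)

lemma integral_Icc_zonal_mul_areaPullback_eq_zero {G : ℝ → ℝ} {h : ℝ × ℝ → E3}
    (hh : ContDiff ℝ 2 h) (hnorm : ∀ p, ‖h p‖ = 1) (hper₁ : Function.Periodic h (1, 0))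
    (hper₂ : Function.Periodic h (0, 1)) (hG : Continuous G) (hmean : ∫ z in (-1)..1, G z = 0)
    (a : ℝ × ℝ) : ∫ p in Icc a (a + 1), G (h p 2) * areaPullback h p = 0 := by
  obtain ⟨A, hA, hdiff, hGA⟩ := exists_eq_one_sub_sq_mul_of_integral_eq_zero hG hmean
  choose θ' hθ' hcurl using exists_hasFDerivAt_zonalOneForm hh hnorm hA hdiff hGA
  have hper : ∀ c, Function.Periodic h c → Function.Periodic (zonalOneForm A h) c := by
    intro c hc p
    have hfderiv : ∀ i, fderiv ℝ (fun q => h q i) (p + c) = fderiv ℝ (fun q => h q i) p :=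
      fun i => periodic_fderiv (hc.comp fun v : E3 => v i) p
    simp only [zonalOneForm, hc p, hfderiv]
  have hcont := (continuous_zonal_mul_areaPullback hG (hh.of_le one_le_two)).fun_neg
  have hstokes := integral_Icc_curl_eq_zero hθ' (hper _ hper₁) (hper _ hper₂)
    (by simpa only [hcurl] using hcont) a
  simpa only [hcurl, integral_neg, neg_eq_zero] using hstokes

lemma integral_mul_integral_zonal_mul_areaPullback_comm {F G : ℝ → ℝ} {h : ℝ × ℝ → E3}
    (hh : ContDiff ℝ 2 h) (hnorm : ∀ p, ‖h p‖ = 1) (hper₁ : Function.Periodic h (1, 0))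
    (hper₂ : Function.Periodic h (0, 1)) (hF : Continuous F) (hG : Continuous G) (a : ℝ × ℝ) :
    (∫ z in (-1)..1, F z) * ∫ p in Icc a (a + 1), G (h p 2) * areaPullback h p =
      (∫ z in (-1)..1, G z) * ∫ p in Icc a (a + 1), F (h p 2) * areaPullback h p := by
  have hint : ∀ H : ℝ → ℝ, Continuous H →
      IntegrableOn (fun p => H (h p 2) * areaPullback h p) (Icc a (a + 1)) := fun H hH =>
    (continuous_zonal_mul_areaPullback hH (hh.of_le one_le_two)).continuousOn.integrableOn_compact
      isCompact_Icc
  set f := ∫ z in (-1)..1, F z with hf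
  set g := ∫ z in (-1)..1, G z with hg
  have hmean : ∫ z in (-1)..1, (f * G z - g * F z) = 0 := by
    rw [intervalIntegral.integral_sub ((hG.const_mul f).intervalIntegrable _ _)
      ((hF.const_mul g).intervalIntegrable _ _), intervalIntegral.integral_const_mul,
      intervalIntegral.integral_const_mul, ← hf, ← hg, mul_comm, sub_self]
  have hstokes := integral_Icc_zonal_mul_areaPullback_eq_zero hh hnorm hper₁ hper₂
    ((hG.const_mul f).fun_sub (hF.const_mul g)) hmean a
  simp only [sub_mul, mul_assoc] at hstokes
  rw [integral_sub ((hint G hG).const_mul f) ((hint F hF).const_mul g), integral_const_mul,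
    integral_const_mul, sub_eq_zero] at hstokes
  exact hstokes

end ZonalForms

section NorthPole

variable {h : ℝ × ℝ → E3}

lemma det_prod_real (L : ℝ × ℝ →L[ℝ] ℝ × ℝ) :
    L.det = (L (1, 0)).1 * (L (0, 1)).2 - (L (1, 0)).2 * (L (0, 1)).1 := by
  rw [ContinuousLinearMap.det, ← LinearMap.det_toMatrix (Module.Basis.finTwoProd ℝ),
    Matrix.det_fin_two]
  simp only [LinearMap.toMatrix_apply, Module.Basis.finTwoProd_zero, Module.Basis.finTwoProd_one,
    Module.Basis.coe_finTwoProd_repr, ContinuousLinearMap.coe_coe, Matrix.cons_val_zero,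
    Matrix.cons_val_one]
  ring

lemma eq_NP_iff_of_norm_eq_one {v : E3} (hv : ‖v‖ = 1) : v = NP ↔ pr12 v = 0 ∧ 0 ≤ v 2 := by
  have hsq : v 0 ^ 2 + v 1 ^ 2 + v 2 ^ 2 = 1 := by rw [← norm_sq_E3, hv, one_pow]
  refine ⟨fun h => ?_, fun ⟨h, h₂⟩ => ?_⟩
  · subst h
    simp [pr12, NP, mk3]
  · simp only [pr12, Prod.mk_eq_zero] at h
    have hv₂ : v 2 = 1 := by nlinarith [h₂]
    ext i
    fin_cases i <;> simp [NP, mk3, h, hv₂]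

lemma det_fderiv_pr12_comp {p : ℝ × ℝ} (hh : DifferentiableAt ℝ h p) (hnorm : ∀ q, ‖h q‖ = 1) :
    (fderiv ℝ (fun q => pr12 (h q)) p).det = h p 2 * areaPullback h p := by
  have hd : ∀ i, DifferentiableAt ℝ (fun q => h q i) p := fun i => by fun_prop
  have hderiv : ∀ v, fderiv ℝ (fun q => pr12 (h q)) p v =
      (fderiv ℝ h p v 0, fderiv ℝ h p v 1) := fun v => by
    rw [← fderiv_coord_apply hh, ← fderiv_coord_apply hh]
    exact congrArg (· v) ((hd 0).hasFDerivAt.prodMk (hd 1).hasFDerivAt).fderiv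
  rw [det_prod_real, hderiv, hderiv]
  exact (cross_eq_det3_smul (hnorm p) (inner_fderiv_eq_zero_of_norm_eq_one hh hnorm (1, 0))
    (inner_fderiv_eq_zero_of_norm_eq_one hh hnorm (0, 1))).1

lemma exists_nhds_integral_Icc_comp_pr12_mul_areaPullback_eq (hh : ContDiff ℝ 1 h)
    (hnorm : ∀ p, ‖h p‖ = 1) (hreg : ∀ p, h p = NP → areaPullback h p ≠ 0) {a b : ℝ × ℝ}
    (hint : Icc a b ∩ h ⁻¹' {NP} ⊆ interior (Icc a b)) :
    ∃ N ∈ 𝓝 (0 : ℝ × ℝ), ∀ φ : ℝ × ℝ → ℝ, Continuous φ → Function.support φ ⊆ N →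
      ∫ p in Icc a b, φ (pr12 (h p)) * max (h p 2) 0 * areaPullback h p =
        (∑ᶠ p ∈ Icc a b ∩ h ⁻¹' {NP}, Real.sign (areaPullback h p)) * ∫ y, φ y := by
  have hcont := hh.continuous
  set W : ℝ × ℝ → ℝ × ℝ := fun p => pr12 (h p)
  have hW : ContDiff ℝ 1 W := by unfold W pr12; fun_prop
  have hdet : ∀ p, (fderiv ℝ W p).det = h p 2 * areaPullback h p := fun p =>
    det_fderiv_pr12_comp (hh.differentiable one_ne_zero p) hnorm
  set K : Set (ℝ × ℝ) := Icc a b ∩ {p | 0 ≤ h p 2}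
  have hheight : Continuous fun p => h p 2 := by fun_prop
  have hclosed : IsClosed {p | 0 ≤ h p 2} := isClosed_le continuous_const hheight
  have hzeros : K ∩ W ⁻¹' {0} = Icc a b ∩ h ⁻¹' {NP} := by
    ext p
    have hp := eq_NP_iff_of_norm_eq_one (hnorm p)
    simp only [K, W, mem_inter_iff, mem_preimage, mem_singleton_iff, hp, mem_ofPred_eq]
    tauto
  have hpole : ∀ p ∈ h ⁻¹' {NP}, h p 2 = 1 := fun p (hp : h p = NP) => by simp [hp, NP, mk3]
  have hzint : K ∩ W ⁻¹' {0} ⊆ interior K := by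
    rw [hzeros, interior_inter]
    refine fun p hp => ⟨hint hp, mem_interior_iff_mem_nhds.2 ?_⟩
    exact (hheight.continuousAt.eventually (lt_mem_nhds (by simp [hpole p hp.2]))).mono
      fun q (hq : 0 < h q 2) => hq.le
  obtain ⟨N, hN, hdeg⟩ := exists_nhds_setIntegral_comp_mul_det_fderiv_eq volume hW
    (isCompact_Icc.inter_right hclosed) hzint fun p hp => by
      rw [hzeros] at hp
      rw [hdet, hpole p hp.2, one_mul]
      exact hreg p hp.2
  refine ⟨N, hN, fun φ hφ hsupp => ?_⟩
  rw [setIntegral_eq_of_subset_of_forall_sdiff_eq_zero measurableSet_Icc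
    (inter_subset_left : K ⊆ Icc a b) fun p hp => ?_, ← hzeros]
  · have hsign : ∀ p ∈ K ∩ W ⁻¹' {0},
        Real.sign (areaPullback h p) = Real.sign (fderiv ℝ W p).det := fun p hp => by
      rw [hzeros] at hp
      rw [hdet, hpole p hp.2, one_mul]
    rw [finsum_mem_congr rfl hsign, ← hdeg φ hφ hsupp]
    refine setIntegral_congr_fun (isClosed_Icc.inter hclosed).measurableSet fun p hp => ?_
    have hpos : 0 ≤ h p 2 := hp.2
    simp only [hdet, max_eq_left hpos, W, mul_assoc]
  · have hneg : ¬0 ≤ h p 2 := fun h₀ => hp.2 ⟨hp.1, h₀⟩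
    rw [max_eq_right (not_le.1 hneg).le, mul_zero, zero_mul]

lemma exists_radial_bump {N : Set (ℝ × ℝ)} (hN : N ∈ 𝓝 0) :
    ∃ ψ : ℝ → ℝ, Continuous ψ ∧ (∀ u, 1 ≤ u → ψ u = 0) ∧ 0 < ∫ u in (0)..1, ψ u ∧
      (Function.support fun y : ℝ × ℝ => ψ (y.1 ^ 2 + y.2 ^ 2)) ⊆ N := by
  obtain ⟨r, hr, hball⟩ := Metric.mem_nhds_iff.1 hN
  have hδ : 0 < min (r ^ 2) 1 := by positivity
  have hcont : Continuous fun u : ℝ => max (min (r ^ 2) 1 - u) 0 := by fun_prop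
  refine ⟨fun u => max (min (r ^ 2) 1 - u) 0, hcont, fun u hu => ?_, ?_, fun y hy => hball ?_⟩
  · exact max_eq_right (sub_nonpos.2 ((min_le_right _ _).trans hu))
  · exact intervalIntegral.integral_pos zero_lt_one hcont.continuousOn
      (fun u _ => le_max_right _ _) ⟨0, by simp, lt_max_of_lt_left (by rwa [sub_zero])⟩
  · have hlt : y.1 ^ 2 + y.2 ^ 2 < r ^ 2 := by
      by_contra! hle
      exact hy (max_eq_right (sub_nonpos.2 ((min_le_left _ _).trans hle)))
    rw [mem_ball_zero_iff, Prod.norm_def, max_lt_iff]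
    exact ⟨abs_lt_of_sq_lt_sq (by nlinarith [sq_nonneg y.2]) hr.le,
      abs_lt_of_sq_lt_sq (by nlinarith [sq_nonneg y.1]) hr.le⟩

lemma integral_Icc_zonal_mul_areaPullback_eq (hh : ContDiff ℝ 2 h) (hnorm : ∀ p, ‖h p‖ = 1)
    (hper₁ : Function.Periodic h (1, 0)) (hper₂ : Function.Periodic h (0, 1))
    (hreg : ∀ p, h p = NP → areaPullback h p ≠ 0) {a : ℝ × ℝ}
    (hint : Icc a (a + 1) ∩ h ⁻¹' {NP} ⊆ interior (Icc a (a + 1))) {G : ℝ → ℝ}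
    (hG : Continuous G) :
    ∫ p in Icc a (a + 1), G (h p 2) * areaPullback h p =
      (2 * Real.pi * ∫ z in (-1)..1, G z) *
        ∑ᶠ p ∈ Icc a (a + 1) ∩ h ⁻¹' {NP}, Real.sign (areaPullback h p) := by
  obtain ⟨N, hN, hdeg⟩ := exists_nhds_integral_Icc_comp_pr12_mul_areaPullback_eq
    (hh.of_le one_le_two) hnorm hreg hint
  obtain ⟨ψ, hψ, hzero, hpos, hsupp⟩ := exists_radial_bump hN
  have hsphere : ∀ p, (pr12 (h p)).1 ^ 2 + (pr12 (h p)).2 ^ 2 = 1 - h p 2 ^ 2 := fun p => by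
    have hsq := norm_sq_E3 (h p)
    rw [hnorm, one_pow] at hsq
    simp only [pr12]
    linarith
  have hlocal := hdeg _ (by fun_prop) hsupp
  have hcomm := integral_mul_integral_zonal_mul_areaPullback_comm hh hnorm hper₁ hper₂
    (F := fun z => max z 0 * ψ (1 - z ^ 2)) (by fun_prop) hG a
  simp only [hsphere, mul_comm (ψ _), integral_comp_sq_add_sq hψ hzero] at hlocal
  rw [hlocal, integral_posPart_mul_comp_one_sub_sq hψ] at hcomm
  refine mul_left_cancel₀ (half_pos hpos).ne' ?_
  rw [hcomm]
  ring

end NorthPole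

section Torus

/-- The half-open unit square with lower left corner `a`: a fundamental domain for `ℤ²` acting on
`ℝ²`. -/
def unitCell (a : ℝ × ℝ) : Set (ℝ × ℝ) := Ico a.1 (a.1 + 1) ×ˢ Ico a.2 (a.2 + 1)

lemma unitCell_ae_eq_Icc (a : ℝ × ℝ) : unitCell a =ᵐ[volume] Icc a (a + 1) := by
  rw [Icc_prod_eq a (a + 1)]
  exact Measure.set_prod_ae_eq Ico_ae_eq_Icc Ico_ae_eq_Icc

variable {X : Type*} [NormedAddCommGroup X] [NormedSpace ℝ X] {F : ℝ × ℝ → X}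

lemma setIntegral_unitCell (hF : Continuous F) (a : ℝ × ℝ) :
    ∫ p in unitCell a, F p = ∫ s in a.1..(a.1 + 1), ∫ t in a.2..(a.2 + 1), F (s, t) := by
  have hint : IntegrableOn F (unitCell a) :=
    (hF.continuousOn.integrableOn_compact isCompact_Icc).congr_set_ae (unitCell_ae_eq_Icc a)
  rw [Measure.volume_eq_prod] at hint ⊢
  rw [unitCell, setIntegral_prod _ hint, intervalIntegral.integral_of_le (by simp),
    ← integral_Ico_eq_integral_Ioc]
  refine integral_congr_ae (.of_forall fun s => ?_)
  simp only [intervalIntegral.integral_of_le (show a.2 ≤ a.2 + 1 by simp),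
    integral_Ico_eq_integral_Ioc]

lemma setIntegral_unitCell_eq_of_periodic (hF : Continuous F)
    (hper₁ : Function.Periodic F (1, 0)) (hper₂ : Function.Periodic F (0, 1)) (a b : ℝ × ℝ) :
    ∫ p in unitCell a, F p = ∫ p in unitCell b, F p := by
  have hs : ∀ t, Function.Periodic (fun s => F (s, t)) 1 := fun t s => by simpa using hper₁ (s, t)
  have ht : ∀ s, Function.Periodic (fun t => F (s, t)) 1 := fun s t => by simpa using hper₂ (s, t)
  have hinner : ∀ s, ∫ t in a.2..(a.2 + 1), F (s, t) = ∫ t in b.2..(b.2 + 1), F (s, t) :=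
    fun s => (ht s).intervalIntegral_add_eq _ _
  have houter : Function.Periodic (fun s => ∫ t in b.2..(b.2 + 1), F (s, t)) 1 := fun s => by
    simp only [hs _ s]
  rw [setIntegral_unitCell hF, setIntegral_unitCell hF]
  simp only [hinner]
  exact houter.intervalIntegral_add_eq _ _

lemma bijOn_toIcoMod (a b : ℝ) :
    BijOn (toIcoMod one_pos b) (Ico a (a + 1)) (Ico b (b + 1)) := by
  have hinv : ∀ c d : ℝ, LeftInvOn (toIcoMod one_pos d) (toIcoMod one_pos c) (Ico d (d + 1)) :=
    fun c d x hx => by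
      rw [toIcoMod_toIcoMod, (toIcoMod_eq_self one_pos).2 hx]
  exact InvOn.bijOn ⟨hinv b a, hinv a b⟩ (fun x _ => toIcoMod_mem_Ico one_pos b x)
    fun x _ => toIcoMod_mem_Ico one_pos a x

lemma finsum_mem_unitCell_eq_of_periodic {M : Type*} [AddCommMonoid M] {k : ℝ × ℝ → M}
    (hper₁ : Function.Periodic k (1, 0)) (hper₂ : Function.Periodic k (0, 1)) (a b : ℝ × ℝ) :
    ∑ᶠ p ∈ unitCell a, k p = ∑ᶠ p ∈ unitCell b, k p := by
  refine finsum_mem_eq_of_bijOn _ ((bijOn_toIcoMod a.1 b.1).prodMap (bijOn_toIcoMod a.2 b.2))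
    fun p _ => ?_
  have hmod : (toIcoMod one_pos b.1 p.1, toIcoMod one_pos b.2 p.2) =
      p - toIcoDiv one_pos b.1 p.1 • ((1 : ℝ), (0 : ℝ)) -
        toIcoDiv one_pos b.2 p.2 • ((0 : ℝ), (1 : ℝ)) := by
    ext <;> simp [toIcoMod]
  rw [hmod, hper₂.sub_zsmul_eq, hper₁.sub_zsmul_eq]

lemma exists_Icc_inter_subset_of_countable {Z : Set (ℝ × ℝ)} (hZ : Z.Countable)
    (hper₁ : ∀ p ∈ Z, p - (1, 0) ∈ Z) (hper₂ : ∀ p ∈ Z, p - (0, 1) ∈ Z) :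
    ∃ a : ℝ × ℝ, Icc a (a + 1) ∩ Z ⊆ interior (Icc a (a + 1)) := by
  obtain ⟨s, hs⟩ := ((hZ.image Prod.fst).dense_compl ℝ).nonempty
  obtain ⟨t, ht⟩ := ((hZ.image Prod.snd).dense_compl ℝ).nonempty
  refine ⟨(s, t), fun p ⟨hp, hpZ⟩ => ?_⟩
  have h₁ : s ≠ p.1 := fun h => hs ⟨p, hpZ, h.symm⟩
  have h₂ : t ≠ p.2 := fun h => ht ⟨p, hpZ, h.symm⟩
  have h₃ : p.1 ≠ s + 1 := fun h => hs ⟨_, hper₁ p hpZ, by simp [h]⟩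
  have h₄ : p.2 ≠ t + 1 := fun h => ht ⟨_, hper₂ p hpZ, by simp [h]⟩
  rw [Icc_prod_eq, interior_prod_eq, interior_Icc, interior_Icc]
  exact ⟨⟨hp.1.1.lt_of_ne h₁, hp.2.1.lt_of_ne h₃⟩, hp.1.2.lt_of_ne h₂, hp.2.2.lt_of_ne h₄⟩

lemma unitCell_inter_eq_Icc_inter {a : ℝ × ℝ} {Z : Set (ℝ × ℝ)}
    (ha : Icc a (a + 1) ∩ Z ⊆ interior (Icc a (a + 1))) :
    unitCell a ∩ Z = Icc a (a + 1) ∩ Z := by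
  refine Subset.antisymm (inter_subset_inter_left _ ?_) fun p hp => ⟨?_, hp.2⟩
  · rw [Icc_prod_eq]
    exact prod_mono Ico_subset_Icc_self Ico_subset_Icc_self
  · have hp' := ha hp
    rw [Icc_prod_eq, interior_prod_eq, interior_Icc, interior_Icc] at hp'
    exact prod_mono Ioo_subset_Ico_self Ioo_subset_Ico_self hp'

end Torus

section Degree

variable {h : ℝ × ℝ → E3}

lemma countable_preimage_NP (hh : ContDiff ℝ 1 h) (hnorm : ∀ p, ‖h p‖ = 1)
    (hreg : ∀ p, h p = NP → areaPullback h p ≠ 0) : (h ⁻¹' {NP}).Countable := by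
  have hpr : ContDiff ℝ 1 fun p => pr12 (h p) := by unfold pr12; fun_prop
  refine (HereditarilyLindelofSpace.isLindelof _).countable_of_isDiscrete
    (isDiscrete_of_det_fderiv_ne_zero hpr (c := 0) (fun p hp => ?_) fun p (hp : h p = NP) => ?_)
  · exact ((eq_NP_iff_of_norm_eq_one (hnorm p)).1 hp).1
  · rw [det_fderiv_pr12_comp (hh.differentiable one_ne_zero p) hnorm, hp,
      show NP 2 = 1 by simp [NP, mk3], one_mul]
    exact hreg p hp

lemma periodic_areaPullback {c : ℝ × ℝ} (hper : Function.Periodic h c) :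
    Function.Periodic (areaPullback h) c := fun p => by
  rw [areaPullback, hper p, periodic_fderiv hper p, areaPullback]

theorem setIntegral_unitCell_zonal_mul_areaPullback (hh : ContDiff ℝ 2 h)
    (hnorm : ∀ p, ‖h p‖ = 1) (hper₁ : Function.Periodic h (1, 0))
    (hper₂ : Function.Periodic h (0, 1)) (hreg : ∀ p, h p = NP → areaPullback h p ≠ 0)
    {G : ℝ → ℝ} (hG : Continuous G) (b : ℝ × ℝ) :
    ∫ p in unitCell b, G (h p 2) * areaPullback h p =
      (2 * Real.pi * ∫ z in (-1)..1, G z) *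
        ∑ᶠ p ∈ unitCell b ∩ h ⁻¹' {NP}, Real.sign (areaPullback h p) := by
  have hh₁ : ContDiff ℝ 1 h := hh.of_le one_le_two
  obtain ⟨a, ha⟩ := exists_Icc_inter_subset_of_countable (countable_preimage_NP hh₁ hnorm hreg)
    (fun p (hp : h p = NP) => (hper₁.sub_eq p).trans hp)
    (fun p (hp : h p = NP) => (hper₂.sub_eq p).trans hp)
  have hperF : ∀ c, Function.Periodic h c →
      Function.Periodic (fun p => G (h p 2) * areaPullback h p) c := fun c hc p => by
    simp only [hc p, periodic_areaPullback hc p]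
  have hperk : ∀ c, Function.Periodic h c →
      Function.Periodic (indicator (h ⁻¹' {NP}) fun p => Real.sign (areaPullback h p)) c :=
    fun c hc p => by
      classical
      simp only [indicator_apply, mem_preimage, hc p, periodic_areaPullback hc p]
  have hsum : ∀ c, ∑ᶠ p ∈ unitCell c ∩ h ⁻¹' {NP}, Real.sign (areaPullback h p) =
      ∑ᶠ p ∈ unitCell c, indicator (h ⁻¹' {NP}) (fun p => Real.sign (areaPullback h p)) p :=
    fun c => by rw [finsum_mem_def, finsum_mem_def, indicator_indicator]
  rw [setIntegral_unitCell_eq_of_periodic (continuous_zonal_mul_areaPullback hG hh₁)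
    (hperF _ hper₁) (hperF _ hper₂) b a, setIntegral_congr_set (unitCell_ae_eq_Icc a),
    integral_Icc_zonal_mul_areaPullback_eq hh hnorm hper₁ hper₂ hreg ha hG,
    ← unitCell_inter_eq_Icc_inter ha, hsum, hsum,
    finsum_mem_unitCell_eq_of_periodic (hperk _ hper₁) (hperk _ hper₂) a b]

end Degree

section Zonal

variable {g : E3 → ℝ}

/-- The values of `g` along the half meridian `{(x, 0, z) | 0 ≤ x}` of the unit sphere, as a
function of the height `z`. -/
def zonalProfile (g : E3 → ℝ) (z : ℝ) : ℝ := g (mk3 (√(1 - z ^ 2)) 0 z)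

lemma continuous_zonalProfile (hg : Continuous g) : Continuous (zonalProfile g) := by
  have hsqrt : Continuous fun z : ℝ => √(1 - z ^ 2) := by fun_prop
  exact hg.comp ((PiLp.continuous_toLp 2 _).comp <| continuous_pi <| Fin.forall_fin_succ.2
    ⟨hsqrt, Fin.forall_fin_two.2 ⟨continuous_const, continuous_id⟩⟩)

lemma eq_zonalProfile
    (hinv : ∀ A ∈ Matrix.specialOrthogonalGroup (Fin 2) ℝ, ∀ v, ‖v‖ = 1 → g (act2 A v) = g v)
    {v : E3} (hv : ‖v‖ = 1) : g v = zonalProfile g (v 2) := by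
  have hsq : 1 - v 2 ^ 2 = v 0 ^ 2 + v 1 ^ 2 := by
    rw [sub_eq_iff_eq_add, ← norm_sq_E3, hv, one_pow]
  obtain ⟨ρ, hρ⟩ : ∃ ρ, ρ = √(1 - v 2 ^ 2) := ⟨_, rfl⟩
  have hρsq : ρ ^ 2 = v 0 ^ 2 + v 1 ^ 2 := by rw [hρ, hsq, Real.sq_sqrt (by positivity)]
  rw [zonalProfile, ← hρ]
  obtain rfl | hρ₀ := eq_or_ne ρ 0
  · have h₀ : v 0 = 0 := by nlinarith [sq_nonneg (v 0), sq_nonneg (v 1)]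
    have h₁ : v 1 = 0 := by nlinarith [sq_nonneg (v 0), sq_nonneg (v 1)]
    congr 1
    ext i
    fin_cases i <;> simp [mk3, h₀, h₁]
  · have hrot : !![v 0 / ρ, v 1 / ρ; -(v 1 / ρ), v 0 / ρ] ∈
        Matrix.specialOrthogonalGroup (Fin 2) ℝ := by
      rw [Matrix.of_mem_specialOrthogonalGroup_fin_two_iff]
      refine ⟨rfl, (neg_neg _).symm, ?_⟩
      field_simp
      exact hρsq.symm
    rw [← hinv _ hrot v hv]
    congr 1
    ext i
    fin_cases i <;> simp [act2, mk3] <;> field_simp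
    · exact hρsq.symm
    · ring

end Zonal

section GaussMap

lemma fderiv_unitv_comp {E : Type*} [NormedAddCommGroup E] [NormedSpace ℝ E] {U : E → E3} {p : E}
    (hU : DifferentiableAt ℝ U p) (hp : U p ≠ 0) :
    ∃ c : E →L[ℝ] ℝ, ∀ v, fderiv ℝ (fun q => unitv (U q)) p v =
      ‖U p‖⁻¹ • fderiv ℝ U p v + c v • U p := by
  have hnorm : DifferentiableAt ℝ (fun q => ‖U q‖⁻¹) p :=
    (hU.norm ℝ hp).inv (norm_ne_zero_iff.2 hp)
  refine ⟨fderiv ℝ (fun q => ‖U q‖⁻¹) p, fun v => ?_⟩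
  exact congrArg (· v) (hnorm.hasFDerivAt.fun_smul hU.hasFDerivAt).fderiv

lemma det3_smul_add_smul (r a b : ℝ) (u v w : E3) :
    det3 (r • u) (r • v + a • u) (r • w + b • u) = r ^ 3 * det3 u v w := by
  simp only [det3, PiLp.add_apply, PiLp.smul_apply, smul_eq_mul]
  ring

lemma areaPullback_unitv_comp {U : ℝ × ℝ → E3} {p : ℝ × ℝ} (hU : DifferentiableAt ℝ U p)
    (hp : U p ≠ 0) : areaPullback (fun q => unitv (U q)) p =
      ‖U p‖⁻¹ ^ 3 * det3 (U p) (fderiv ℝ U p (1, 0)) (fderiv ℝ U p (0, 1)) := by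
  obtain ⟨c, hc⟩ := fderiv_unitv_comp hU hp
  rw [areaPullback, hc, hc, unitv, det3_smul_add_smul]

variable {f₁ f₂ : ℝ → E3}

/-- The map `h : ℝ² → S²` of two disjoint parametrized curves, whose degree is the linking
number. -/
def gaussMap (f₁ f₂ : ℝ → E3) (p : ℝ × ℝ) : E3 := unitv (f₂ p.2 - f₁ p.1)

lemma norm_gaussMap (hdisj : ∀ s t, f₁ s ≠ f₂ t) (p : ℝ × ℝ) : ‖gaussMap f₁ f₂ p‖ = 1 :=
  norm_smul_inv_norm (𝕜 := ℝ) (sub_ne_zero.2 (hdisj p.1 p.2).symm)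

lemma contDiff_gaussMap {n : WithTop ℕ∞} (h₁ : ContDiff ℝ n f₁) (h₂ : ContDiff ℝ n f₂)
    (hdisj : ∀ s t, f₁ s ≠ f₂ t) : ContDiff ℝ n (gaussMap f₁ f₂) := by
  have hne : ∀ p : ℝ × ℝ, f₂ p.2 - f₁ p.1 ≠ 0 := fun p => sub_ne_zero.2 (hdisj p.1 p.2).symm
  have hU : ContDiff ℝ n fun p : ℝ × ℝ => f₂ p.2 - f₁ p.1 := by fun_prop
  exact ((hU.norm ℝ hne).inv fun p => norm_ne_zero_iff.2 (hne p)).smul hU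

lemma areaPullback_gaussMap {p : ℝ × ℝ} (h₁ : DifferentiableAt ℝ f₁ p.1)
    (h₂ : DifferentiableAt ℝ f₂ p.2) (hp : f₁ p.1 ≠ f₂ p.2) :
    areaPullback (gaussMap f₁ f₂) p = ‖f₂ p.2 - f₁ p.1‖⁻¹ ^ 3 *
      det3 (f₂ p.2 - f₁ p.1) (-deriv f₁ p.1) (deriv f₂ p.2) := by
  have hU := (h₂.hasFDerivAt.comp p hasFDerivAt_snd).sub (h₁.hasFDerivAt.comp p hasFDerivAt_fst)
  refine (areaPullback_unitv_comp hU.differentiableAt (sub_ne_zero.2 hp.symm)).trans ?_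
  rw [hU.fderiv]
  simp

lemma unitv_eq_NP_iff {u : E3} (hu : u ≠ 0) : unitv u = NP ↔ pr12 u = 0 ∧ 0 < u 2 := by
  have hpos : 0 < ‖u‖ := norm_pos_iff.2 hu
  have hunit : ‖unitv u‖ = 1 := norm_smul_inv_norm (𝕜 := ℝ) hu
  have hcoord : u 0 = 0 → u 1 = 0 → u 2 ≠ 0 := fun h₀ h₁ h₂ => hu <| by
    ext i
    fin_cases i <;> simpa
  rw [eq_NP_iff_of_norm_eq_one hunit]
  simp only [pr12, unitv, PiLp.smul_apply, smul_eq_mul, Prod.mk_eq_zero, mul_eq_zero,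
    inv_eq_zero, hpos.ne', false_or, mul_nonneg_iff_of_pos_left (inv_pos.2 hpos)]
  exact ⟨fun ⟨h, h₂⟩ => ⟨h, h₂.lt_of_ne (hcoord h.1 h.2).symm⟩, fun ⟨h, h₂⟩ => ⟨h, h₂.le⟩⟩

lemma gaussMap_eq_NP_iff {p : ℝ × ℝ} (hp : f₁ p.1 ≠ f₂ p.2) : gaussMap f₁ f₂ p = NP ↔
    pr12 (f₁ p.1) = pr12 (f₂ p.2) ∧ pr3 (f₁ p.1) < pr3 (f₂ p.2) := by
  rw [gaussMap, unitv_eq_NP_iff (sub_ne_zero.2 hp.symm), eq_comm (a := pr12 (f₁ p.1))]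
  simp only [pr12, pr3, PiLp.sub_apply, Prod.mk_eq_zero, sub_eq_zero, sub_pos, Prod.mk.injEq]

lemma exists_pos_areaPullback_gaussMap_eq_mul_cross2 {p : ℝ × ℝ}
    (h₁ : DifferentiableAt ℝ f₁ p.1) (h₂ : DifferentiableAt ℝ f₂ p.2)
    (hpr : pr12 (f₁ p.1) = pr12 (f₂ p.2)) (hover : pr3 (f₁ p.1) < pr3 (f₂ p.2)) :
    ∃ c > 0, areaPullback (gaussMap f₁ f₂) p = c * cross2 (deriv f₂ p.2) (deriv f₁ p.1) := by
  have hne : f₁ p.1 ≠ f₂ p.2 := fun h => hover.ne (congrArg pr3 h)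
  have hnorm : 0 < ‖f₂ p.2 - f₁ p.1‖ := norm_sub_pos_iff.2 hne.symm
  obtain ⟨h₀, h₁'⟩ := Prod.mk.inj hpr
  refine ⟨‖f₂ p.2 - f₁ p.1‖⁻¹ ^ 3 * (pr3 (f₂ p.2) - pr3 (f₁ p.1)),
    mul_pos (by positivity) (sub_pos.2 hover), ?_⟩
  rw [areaPullback_gaussMap h₁ h₂ hne]
  simp only [det3, cross2, pr3, PiLp.sub_apply, PiLp.neg_apply, h₀, h₁']
  ring

lemma sign_mul_of_pos {c : ℝ} (hc : 0 < c) (x : ℝ) : Real.sign (c * x) = Real.sign x := by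
  rcases lt_trichotomy x 0 with hx | rfl | hx
  · rw [Real.sign_of_neg hx, Real.sign_of_neg (mul_neg_of_pos_of_neg hc hx)]
  · rw [mul_zero]
  · rw [Real.sign_of_pos hx, Real.sign_of_pos (mul_pos hc hx)]

lemma unitCell_inter_preimage_gaussMap (hdisj : ∀ s t, f₁ s ≠ f₂ t) :
    unitCell 0 ∩ gaussMap f₁ f₂ ⁻¹' {NP} = Crossing12 f₁ f₂ := by
  ext p
  simp only [mem_inter_iff, mem_preimage, mem_singleton_iff, gaussMap_eq_NP_iff (hdisj p.1 p.2),
    unitCell, mem_prod, Prod.fst_zero, Prod.snd_zero, zero_add, and_assoc, Crossing12,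
    mem_ofPred_eq]

lemma finsum_sign_areaPullback_gaussMap (h₁ : Differentiable ℝ f₁) (h₂ : Differentiable ℝ f₂)
    (hdisj : ∀ s t, f₁ s ≠ f₂ t) :
    ∑ᶠ p ∈ unitCell 0 ∩ gaussMap f₁ f₂ ⁻¹' {NP}, Real.sign (areaPullback (gaussMap f₁ f₂) p) =
      lkSum f₁ f₂ := by
  rw [lkSum]
  refine finsum_mem_congr (unitCell_inter_preimage_gaussMap hdisj) fun p hp => ?_
  obtain ⟨c, hc, harea⟩ :=
    exists_pos_areaPullback_gaussMap_eq_mul_cross2 (h₁ p.1) (h₂ p.2) hp.2.2.1 hp.2.2.2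
  rw [harea, sign_mul_of_pos hc]

lemma form2_comp_coords (g : E3 → ℝ) (h : ℝ × ℝ → E3) (x : E2) :
    form2 g (fun y : E2 => h (y 0, y 1)) x 0 1 =
      g (h (x 0, x 1)) * areaPullback h (x 0, x 1) := by
  have hchain : ∀ i, pdv (fun y : E2 => h (y 0, y 1)) i x =
      fderiv ℝ h (x 0, x 1) (EuclideanSpace.single i 1 0, EuclideanSpace.single i 1 1) := fun i =>
    congrArg (· (EuclideanSpace.single i 1)) (((EuclideanSpace.equiv (Fin 2) ℝ).trans
      (ContinuousLinearEquiv.finTwoArrow ℝ ℝ)).comp_right_fderiv (f := h) (x := x))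
  simp only [form2, areaPullback, hchain, PiLp.single_apply]
  rfl

lemma setIntegral_sq01_comp_coords {X : Type*} [NormedAddCommGroup X] [NormedSpace ℝ X]
    (H : ℝ × ℝ → X) :
    ∫ x in sq01, H (x 0, x 1) = ∫ p in unitCell 0, H p := by
  have hcoords := (volume_preserving_finTwoArrow ℝ).comp
    (EuclideanSpace.volume_preserving_symm_measurableEquiv_toLp (Fin 2))
  refine Eq.trans (congrArg (fun s : Set E2 => ∫ x in s, H (x 0, x 1)) ?_)
    (hcoords.setIntegral_preimage_emb ((MeasurableEquiv.measurableEmbedding _).comp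
      (MeasurableEquiv.measurableEmbedding _)) H (unitCell 0))
  ext x
  simp [sq01, unitCell]

theorem lkIntegral_eq_setIntegral_gaussMap (f₁ f₂ : ℝ → E3) (g : E3 → ℝ) :
    lkIntegral f₁ f₂ g =
      ∫ p in unitCell 0, g (gaussMap f₁ f₂ p) * areaPullback (gaussMap f₁ f₂) p := by
  rw [← setIntegral_sq01_comp_coords, lkIntegral]
  exact congrArg _ (funext fun x => form2_comp_coords g (gaussMap f₁ f₂) x)

end GaussMap

theorem statement8_general {f₁ f₂ : ℝ → E3} (h₁ : ContDiff ℝ 2 f₁) (h₂ : ContDiff ℝ 2 f₂)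
    (hper₁ : Function.Periodic f₁ 1) (hper₂ : Function.Periodic f₂ 1)
    (hdisj : ∀ s t, f₁ s ≠ f₂ t)
    (htrans : ∀ s t, pr12 (f₁ s) = pr12 (f₂ t) → pr3 (f₁ s) < pr3 (f₂ t) →
      cross2 (deriv f₂ t) (deriv f₁ s) ≠ 0)
    {g : E3 → ℝ} (hg : Continuous g)
    (hinv : ∀ A ∈ Matrix.specialOrthogonalGroup (Fin 2) ℝ, ∀ v, ‖v‖ = 1 → g (act2 A v) = g v) :
    lkIntegral f₁ f₂ g =
      (∫ v : Metric.sphere (0 : E3) 1, g v ∂(volume : Measure E3).toSphere) * lkSum f₁ f₂ := by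
  have hd₁ : Differentiable ℝ f₁ := h₁.differentiable two_ne_zero
  have hd₂ : Differentiable ℝ f₂ := h₂.differentiable two_ne_zero
  have hreg : ∀ p, gaussMap f₁ f₂ p = NP → areaPullback (gaussMap f₁ f₂) p ≠ 0 := fun p hp => by
    obtain ⟨hpr, hover⟩ := (gaussMap_eq_NP_iff (hdisj p.1 p.2)).1 hp
    obtain ⟨c, hc, harea⟩ :=
      exists_pos_areaPullback_gaussMap_eq_mul_cross2 (hd₁ p.1) (hd₂ p.2) hpr hover
    exact harea ▸ mul_ne_zero hc.ne' (htrans _ _ hpr hover)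
  have hmass : ∫ v : Metric.sphere (0 : E3) 1, g v ∂(volume : Measure E3).toSphere =
      2 * Real.pi * ∫ z in (-1)..1, zonalProfile g z := by
    rw [← integral_toSphere_comp_height _ (continuous_zonalProfile hg)]
    exact congrArg _ (funext fun v => eq_zonalProfile hinv (norm_eq_of_mem_sphere v))
  rw [lkIntegral_eq_setIntegral_gaussMap, hmass, ← finsum_sign_areaPullback_gaussMap hd₁ hd₂ hdisj,
    ← setIntegral_unitCell_zonal_mul_areaPullback (contDiff_gaussMap h₁ h₂ hdisj)
      (norm_gaussMap hdisj) (fun p => by simp [gaussMap, hper₁ p.1])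
      (fun p => by simp [gaussMap, hper₂ p.2]) hreg (continuous_zonalProfile hg) 0]
  simp only [eq_zonalProfile hinv (norm_gaussMap hdisj _)]

/-- the linking number of a 2-component link as a localized
configuration space integral. Let `(f₁, f₂)` be a smooth 2-component link of circles
(parametrized with period 1) whose diagram has only transverse double crossings. Then
for every `ε > 0` and every 2-form `η` as specified, `∫_{S¹×S¹} h*η` equals the linking
number `lk(f₁, f₂)` — the mapping degree of `h`, i.e. the sum of the signs of those
crossings of the diagram at which `f₂` passes over `f₁`. -/
theorem statement8 (f₁ f₂ : ℝ → E3) (h₁ : IsLoop f₁) (h₂ : IsLoop f₂)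
    (hdisj : ∀ s t, f₁ s ≠ f₂ t) (hD : OnlyDouble2 ![f₁, f₂])
    (ε : ℝ) (hε : 0 < ε) (g : E3 → ℝ) (hg : IsEtaForm ε g) :
    lkIntegral f₁ f₂ g = lkSum f₁ f₂ := by
  rw [statement8_general (contDiff_infty.1 h₁.1 2) (contDiff_infty.1 h₂.1 2) h₁.2.1 h₂.2.1
    hdisj (fun s t hpr _ => hD.1 1 0 t s (hdisj s t).symm hpr.symm) hg.1.continuous
    fun A hA => hg.2.2.1 A (Matrix.mem_orthogonalGroup_iff _ _ |>.1 hA.1), hg.2.2.2, one_mul]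
end
end

section
/- Let f = f₁ ⊔ f₂ ⊔ f₃ be a 3-component long link and let D be a diagram of f all of whose crossings are transverse double points (in particular D has no triple points). Then for all sufficiently small ε > 0 the integrand of I_𝒴(f) vanishes identically, so I_𝒴(f) = 0; in particular lim_{ε→0} I_𝒴(f) = 0. -/
open MeasureTheory Filter Topology Set

noncomputable section

/-! If `η` is supported within a small distance of `N`, a configuration with nonzero integrand has
the three vectors `x₄ - f₁(x₁)`, `f₂(x₂) - x₄` and `x₄ - f₃(x₃)` in a thin convex cone around the
vertical axis. Adding them, `f₂(x₂) - f₁(x₁)` and `f₂(x₂) - f₃(x₃)` lie in this cone as well, so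
the free point `x₄` drops out. Two points of height zero never differ by a vector of the cone, so
these configurations stay in a compact set; heights being bounded, the three projections then
approach each other as the cone gets thinner, and a triple point would appear in the limit. -/

/-- The cone of upward pointing vectors of `ℝ³` whose deviation from the vertical, measured in the
sup norm of `N^⊥ = ℝ × ℝ`, is at most `c` times their height. It is a thin neighbourhood of the
ray spanned by `N` when `c` is small. -/
def steepCone (c : ℝ) : ConvexCone ℝ E3 where
  carrier := {v | 0 < pr3 v ∧ ‖pr12 v‖ ≤ c * pr3 v}
  smul_mem' a ha v hv := by
    refine ⟨mul_pos ha hv.1, ?_⟩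
    calc ‖pr12 (a • v)‖ = a * ‖pr12 v‖ := by
          rw [show pr12 (a • v) = a • pr12 v from rfl, norm_smul_of_nonneg ha.le]
      _ ≤ a * (c * pr3 v) := by gcongr; exact hv.2
      _ = c * pr3 (a • v) := mul_left_comm a c (pr3 v)
  add_mem' v hv w hw := by
    refine ⟨add_pos hv.1 hw.1, ?_⟩
    calc ‖pr12 (v + w)‖ ≤ ‖pr12 v‖ + ‖pr12 w‖ := norm_add_le (pr12 v) (pr12 w)
      _ ≤ c * pr3 v + c * pr3 w := add_le_add hv.2 hw.2
      _ = c * pr3 (v + w) := (mul_add c (pr3 v) (pr3 w)).symm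

lemma steepCone_mono : Monotone steepCone := fun _ _ hcd _ hv =>
  ⟨hv.1, hv.2.trans (mul_le_mul_of_nonneg_right hcd hv.1.le)⟩

lemma continuous_pr12 : Continuous pr12 := by
  unfold pr12; fun_prop

lemma continuous_pr3 : Continuous pr3 := by
  unfold pr3; fun_prop

lemma norm_pr12_le (v : E3) : ‖pr12 v‖ ≤ ‖v‖ :=
  max_le (PiLp.norm_apply_le v 0) (PiLp.norm_apply_le v 1)

lemma norm_unitv {v : E3} (hv : v ≠ 0) : ‖unitv v‖ = 1 :=
  NormedSpace.norm_normalize hv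

lemma mem_steepCone_of_norm_sub_NP_lt {c : ℝ} (hc : 0 < c) {v : E3}
    (hv : ‖v - NP‖ < c / (1 + c)) : v ∈ steepCone c := by
  have hheight : 1 / (1 + c) < pr3 v := by
    have hdiff : |pr3 v - 1| < c / (1 + c) := by
      simpa [pr3, NP, mk3] using (PiLp.norm_apply_le (v - NP) 2).trans_lt hv
    have hsplit : 1 / (1 + c) = 1 - c / (1 + c) := by field_simp; ring
    linarith [(abs_lt.mp hdiff).1]
  refine ⟨lt_trans (by positivity) hheight, ?_⟩
  calc ‖pr12 v‖ = ‖pr12 (v - NP)‖ := by simp [pr12, NP, mk3]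
    _ ≤ c / (1 + c) := (norm_pr12_le _).trans hv.le
    _ = c * (1 / (1 + c)) := by ring
    _ ≤ c * pr3 v := by gcongr

lemma exists_pos_le_max_dist {X Y Z P : Type*} [TopologicalSpace X] [TopologicalSpace Y]
    [TopologicalSpace Z] [MetricSpace P] {a : X → P} {b : Y → P} {d : Z → P}
    (ha : Continuous a) (hb : Continuous b) (hd : Continuous d)
    {K : Set X} {L : Set Y} {M : Set Z} (hK : IsCompact K) (hL : IsCompact L) (hM : IsCompact M)
    (hne : ∀ x ∈ K, ∀ y ∈ L, ∀ z ∈ M, b y = a x → b y ≠ d z) :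
    ∃ δ > 0, ∀ x ∈ K, ∀ y ∈ L, ∀ z ∈ M, δ ≤ max (dist (b y) (a x)) (dist (b y) (d z)) := by
  have hcont : Continuous fun p : X × Y × Z =>
      max (dist (b p.2.1) (a p.1)) (dist (b p.2.1) (d p.2.2)) := by fun_prop
  obtain ⟨δ, hδ, hle⟩ := (hK.prod (hL.prod hM)).exists_forall_le' hcont.continuousOn (a := 0) <| by
    rintro ⟨x, y, z⟩ ⟨hx, hy, hz⟩
    by_cases h : b y = a x
    · exact lt_max_of_lt_right (dist_pos.mpr (hne x hx y hy z hz h))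
    · exact lt_max_of_lt_left (dist_pos.mpr h)
  exact ⟨δ, hδ, fun x hx y hy z hz => hle (x, y, z) ⟨hx, hy, hz⟩⟩

/-- The behaviour at infinity of a strand that confines configurations to compact sets: outside a
compact set of parameters the strand runs in the plane `N^⊥`, and it escapes to infinity there. -/
structure IsFlatAtInfinity {X : Type*} [TopologicalSpace X] (γ : X → E3) : Prop where
  continuous : Continuous γ
  tendsto_pr12 : Tendsto (fun x => pr12 (γ x)) (cocompact X) (cocompact (ℝ × ℝ))
  hasCompactSupport_pr3 : HasCompactSupport fun x => pr3 (γ x)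

namespace IsFlatAtInfinity

variable {X Y Z : Type*} [TopologicalSpace X] [TopologicalSpace Y] [TopologicalSpace Z]
  {α : X → E3} {β : Y → E3} {γ : Z → E3}

lemma exists_dist_pr12_le (hα : IsFlatAtInfinity α) (hβ : IsFlatAtInfinity β) :
    ∃ M, ∀ c, 0 ≤ c → ∀ x y, α x - β y ∈ steepCone c →
      dist (pr12 (α x)) (pr12 (β y)) ≤ c * M := by
  obtain ⟨A, hA⟩ := hα.hasCompactSupport_pr3.exists_bound_of_continuous
    (continuous_pr3.comp hα.continuous)
  obtain ⟨B, hB⟩ := hβ.hasCompactSupport_pr3.exists_bound_of_continuous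
    (continuous_pr3.comp hβ.continuous)
  refine ⟨A + B, fun c hc x y hxy => ?_⟩
  calc dist (pr12 (α x)) (pr12 (β y)) = ‖pr12 (α x - β y)‖ := dist_eq_norm _ _
    _ ≤ c * (pr3 (α x) - pr3 (β y)) := hxy.2
    _ ≤ c * (A + B) := by
      gcongr
      exact (le_abs_self _).trans ((norm_sub_le _ _).trans (add_le_add (hA x) (hB y)))

lemma exists_isCompact_of_sub_mem_steepCone (hα : IsFlatAtInfinity α) (hβ : IsFlatAtInfinity β)
    {c : ℝ} (hc : 0 ≤ c) :
    ∃ K : Set X, IsCompact K ∧ ∃ L : Set Y, IsCompact L ∧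
      ∀ x y, α x - β y ∈ steepCone c → x ∈ K ∧ y ∈ L := by
  obtain ⟨M, hM⟩ := hα.exists_dist_pr12_le hβ
  set S := tsupport fun x => pr3 (α x)
  set T := tsupport fun y => pr3 (β y)
  set P := (fun x => pr12 (α x)) '' S ∪ (fun y => pr12 (β y)) '' T
  have hP : IsCompact P :=
    (hα.hasCompactSupport_pr3.isCompact.image (continuous_pr12.comp hα.continuous)).union
      (hβ.hasCompactSupport_pr3.isCompact.image (continuous_pr12.comp hβ.continuous))
  have hthick : IsCompact (Metric.cthickening (c * M) P) := hP.cthickening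
  obtain ⟨K, hK, hαK⟩ := mem_cocompact.mp (hα.tendsto_pr12 hthick.compl_mem_cocompact)
  obtain ⟨L, hL, hβL⟩ := mem_cocompact.mp (hβ.tendsto_pr12 hthick.compl_mem_cocompact)
  refine ⟨K, hK, L, hL, fun x y hxy => ?_⟩
  have hdist := hM c hc x y hxy
  have hST : x ∈ S ∨ y ∈ T := by
    by_contra! h
    have hlt : 0 < pr3 (α x) - pr3 (β y) := hxy.1
    rw [image_eq_zero_of_notMem_tsupport h.1, image_eq_zero_of_notMem_tsupport h.2] at hlt
    simp at hlt
  have hnear : pr12 (α x) ∈ Metric.cthickening (c * M) P ∧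
      pr12 (β y) ∈ Metric.cthickening (c * M) P := by
    rcases hST with hx | hy
    · have hxP : pr12 (α x) ∈ P := .inl ⟨x, hx, rfl⟩
      exact ⟨Metric.self_subset_cthickening P hxP,
        Metric.mem_cthickening_of_dist_le _ _ _ _ hxP (by rwa [dist_comm])⟩
    · have hyP : pr12 (β y) ∈ P := .inr ⟨y, hy, rfl⟩
      exact ⟨Metric.mem_cthickening_of_dist_le _ _ _ _ hyP hdist,
        Metric.self_subset_cthickening P hyP⟩
  exact ⟨by_contra fun hx => hαK hx hnear.1, by_contra fun hy => hβL hy hnear.2⟩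

lemma eventually_sub_notMem_steepCone (hα : IsFlatAtInfinity α) (hβ : IsFlatAtInfinity β)
    (hγ : IsFlatAtInfinity γ) (hne : ∀ x y z, pr12 (β y) = pr12 (α x) → pr12 (β y) ≠ pr12 (γ z)) :
    ∀ᶠ c in 𝓝[>] 0, ∀ x y z, β y - α x ∈ steepCone c → β y - γ z ∉ steepCone c := by
  obtain ⟨L, hL, K, hK, hLK⟩ := hβ.exists_isCompact_of_sub_mem_steepCone hα zero_le_one
  obtain ⟨_, -, J, hJ, hLJ⟩ := hβ.exists_isCompact_of_sub_mem_steepCone hγ zero_le_one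
  obtain ⟨δ, hδ, hgap⟩ := exists_pos_le_max_dist (P := ℝ × ℝ)
    (continuous_pr12.comp hα.continuous) (continuous_pr12.comp hβ.continuous)
    (continuous_pr12.comp hγ.continuous) hK hL hJ fun x _ y _ z _ => hne x y z
  obtain ⟨A, hA⟩ := hβ.exists_dist_pr12_le hα
  obtain ⟨B, hB⟩ := hβ.exists_dist_pr12_le hγ
  have hsmall (M : ℝ) : ∀ᶠ c in 𝓝[>] (0 : ℝ), c * M < δ :=
    ((continuous_mul_const M).tendsto' 0 0 (zero_mul M)).mono_left nhdsWithin_le_nhds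
      |>.eventually_lt_const hδ
  filter_upwards [Ioc_mem_nhdsGT one_pos, hsmall A, hsmall B] with c hc hcA hcB x y z hyx hyz
  obtain ⟨hy, hx⟩ := hLK y x (steepCone_mono hc.2 hyx)
  obtain ⟨-, hz⟩ := hLJ y z (steepCone_mono hc.2 hyz)
  have hlt := max_lt ((hA c hc.1.le y x hyx).trans_lt hcA) ((hB c hc.1.le y z hyz).trans_lt hcB)
  exact hlt.not_ge (hgap x hx y hy z hz)

end IsFlatAtInfinity

lemma IsLongLink3.isFlatAtInfinity {f : Fin 3 → ℝ → E3} (hf : IsLongLink3 f) (i : Fin 3) :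
    IsFlatAtInfinity (f i) where
  continuous := (hf.1 i).continuous
  tendsto_pr12 := by
    rw [← Metric.cobounded_eq_cocompact (α := ℝ × ℝ), ← tendsto_norm_atTop_iff_cobounded]
    refine tendsto_atTop_mono' _ ?_ (tendsto_norm_cocompact_atTop (E := ℝ))
    filter_upwards [(tendsto_norm_cocompact_atTop (E := ℝ)).eventually_ge_atTop 1] with x hx
    calc ‖x‖ = ‖(pr12 (f i x)).1‖ := by simp [hf.2.2.2 i x hx, pr12, mk3]
      _ ≤ ‖pr12 (f i x)‖ := norm_fst_le _
  hasCompactSupport_pr3 := by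
    refine .intro (isCompact_Icc (a := -1) (b := 1)) fun x hx => ?_
    have hx' : 1 ≤ |x| := (not_le.mp fun h => hx (abs_le.mp h)).le
    simp [hf.2.2.2 i x hx', pr3, mk3]

lemma OnlyDoubleL.pr12_ne {f : Fin 3 → ℝ → E3} (hD : OnlyDoubleL f) (s t u : ℝ)
    (hst : pr12 (f 1 t) = pr12 (f 0 s)) : pr12 (f 1 t) ≠ pr12 (f 2 u) :=
  hD.2 0 1 2 s t u (by simp) (by simp) (by simp) hst.symm

/-- Condition (i) on a form `η = g · (area form)`: the support of its restriction to `S²` lies in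
the `ε`-neighbourhood of the north pole. -/
def IsSupportedNearNP (ε : ℝ) (g : E3 → ℝ) : Prop :=
  ∀ v : E3, ‖v‖ = 1 → g v ≠ 0 → ‖v - NP‖ < ε

lemma IsEtaForm.isSupportedNearNP {ε : ℝ} {g : E3 → ℝ} (hg : IsEtaForm ε g) :
    IsSupportedNearNP ε g :=
  hg.2.1

lemma IsSupportedNearNP.mem_steepCone {c ε : ℝ} {g : E3 → ℝ} (hg : IsSupportedNearNP ε g)
    (hc : 0 < c) (hε : ε ≤ c / (1 + c)) {v : E3} (hv : v ≠ 0) (hgv : g (unitv v) ≠ 0) :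
    v ∈ steepCone c := by
  have hunit : unitv v ∈ steepCone c :=
    mem_steepCone_of_norm_sub_NP_lt hc ((hg _ (norm_unitv hv) hgv).trans_le hε)
  exact ((steepCone c).smul_mem_iff (inv_pos.mpr (norm_pos_iff.mpr hv))).mp hunit

lemma ne_zero_of_wedge222_ne_zero {g : E3 → ℝ} {h k l : E6 → E3} {x : E6}
    (hx : wedge222 g h k l x ≠ 0) : g (h x) ≠ 0 ∧ g (k x) ≠ 0 ∧ g (l x) ≠ 0 := by
  refine ⟨fun h0 => hx ?_, fun h0 => hx ?_, fun h0 => hx ?_⟩ <;> simp [wedge222, form2, h0]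

theorem exists_forall_omegaYL_eq_zero {f : Fin 3 → ℝ → E3} (hf : ∀ i, IsFlatAtInfinity (f i))
    (hne : ∀ s t u, pr12 (f 1 t) = pr12 (f 0 s) → pr12 (f 1 t) ≠ pr12 (f 2 u)) :
    ∃ ε₀ > (0 : ℝ), ∀ ε < ε₀, ∀ g, IsSupportedNearNP ε g → ∀ x ∈ CYL f, omegaYL f g x = 0 := by
  obtain ⟨c, hsteep, (hc : 0 < c)⟩ :=
    (((hf 0).eventually_sub_notMem_steepCone (hf 1) (hf 2) hne).and self_mem_nhdsWithin).exists
  refine ⟨c / (1 + c), by positivity, fun ε hε g hg x hx => by_contra fun hω => ?_⟩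
  obtain ⟨hg₀, hg₁, hg₂⟩ := ne_zero_of_wedge222_ne_zero hω
  have hmem {v : E3} (hv : v ≠ 0) (hgv : g (unitv v) ≠ 0) : v ∈ steepCone c :=
    hg.mem_steepCone hc hε.le hv hgv
  have h₁₄ := hmem (sub_ne_zero.mpr hx.1) hg₀
  have h₄₂ := hmem (sub_ne_zero.mpr hx.2.1.symm) hg₁
  have h₃₄ := hmem (sub_ne_zero.mpr hx.2.2) hg₂
  refine hsteep (x 0) (x 1) (x 2) ?_ ?_
  · simpa only [sub_add_sub_cancel] using (steepCone c).add_mem h₄₂ h₁₄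
  · simpa only [sub_add_sub_cancel] using (steepCone c).add_mem h₄₂ h₃₄

theorem statement10_general (f : Fin 3 → ℝ → E3) (hf : ∀ i, IsFlatAtInfinity (f i))
    (hne : ∀ s t u, pr12 (f 1 t) = pr12 (f 0 s) → pr12 (f 1 t) ≠ pr12 (f 2 u)) :
    (∃ ε₀ > (0 : ℝ), ∀ ε < ε₀, ∀ g, IsSupportedNearNP ε g →
      (∀ x ∈ CYL f, omegaYL f g x = 0) ∧ ILY f g = 0) ∧
    ∀ G : ℝ → E3 → ℝ, (∀ ε > 0, IsSupportedNearNP ε (G ε)) →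
      Tendsto (fun ε => ILY f (G ε)) (𝓝[>] 0) (𝓝 0) := by
  obtain ⟨ε₀, hε₀, hω⟩ := exists_forall_omegaYL_eq_zero hf hne
  have hI {ε : ℝ} (hε : ε < ε₀) {g : E3 → ℝ} (hg : IsSupportedNearNP ε g) : ILY f g = 0 :=
    setIntegral_eq_zero_of_forall_eq_zero (hω ε hε g hg)
  refine ⟨⟨ε₀, hε₀, fun ε hε g hg => ⟨hω ε hε g hg, hI hε hg⟩⟩, fun G hG => ?_⟩
  refine tendsto_const_nhds.congr' ?_
  filter_upwards [Ioo_mem_nhdsGT hε₀] with ε hε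
  exact (hI hε.2 (hG ε hε.1)).symm

/-- vanishing of the `𝒴`-integral for diagrams without triple points.
Let `f` be a 3-component long link whose diagram has only transverse double crossings
(in particular no triple points). Then for all sufficiently small `ε > 0` the integrand
of `I_𝒴(f)` vanishes identically, so `I_𝒴(f) = 0`; in particular
`lim_{ε→0} I_𝒴(f) = 0` for every family `ε ↦ η_ε` of 2-forms as specified. -/
theorem statement10 (f : Fin 3 → ℝ → E3) (hf : IsLongLink3 f) (hD : OnlyDoubleL f) :
    (∃ ε₀ > (0 : ℝ), ∀ ε : ℝ, 0 < ε → ε < ε₀ → ∀ g : E3 → ℝ, IsEtaForm ε g →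
      (∀ x ∈ CYL f, omegaYL f g x = 0) ∧ ILY f g = 0) ∧
    ∀ G : ℝ → E3 → ℝ, (∀ ε : ℝ, 0 < ε → IsEtaForm ε (G ε)) →
      Tendsto (fun ε => ILY f (G ε)) (𝓝[>] 0) (𝓝 0) := by
  obtain ⟨⟨ε₀, hε₀, hω⟩, hlim⟩ := statement10_general f hf.isFlatAtInfinity hD.pr12_ne
  exact ⟨⟨ε₀, hε₀, fun ε _ hε g hg => hω ε hε g hg.isSupportedNearNP⟩,
    fun G hG => hlim G fun ε hε => (hG ε hε).isSupportedNearNP⟩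

end
end
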